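/- arXiv:2301.04629 — 3 statements merged into one kernel-verified Lean document; each statement's English description precedes it below -/
import Mathlib

section
/- Let κ, μ, z be complex numbers with Re(μ + κ + 1/2) > 0 and Re(μ − κ + 1/2) > 0, and let z be a positive real number. Then the Whittaker function of the first kind admits the integral representation M_{κ,μ}(z) = (√π · Γ(2μ+1)) / (2^μ · Γ((μ+κ+1/2)/2) · Γ((μ−κ+1/2)/2)) · √z · ∫₀¹ ξ^{(−κ+1/2)/2 − 1} (1−ξ)^{(κ+1/2)/2 − 1} e^{(ξ−1/2)z} J_μ(√(ξ(1−ξ)) · z) dξ. -/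
open scoped Real

/-- Pochhammer symbol `(x)_n = x (x+1) ⋯ (x+n-1)`. -/
noncomputable def poch (x : ℂ) (n : ℕ) : ℂ := ∏ k ∈ Finset.range n, (x + k)

/-- Bessel function of the first kind `J_ν(z)` of complex order. -/
noncomputable def besselJ (ν z : ℂ) : ℂ :=
  ∑' n : ℕ, ((-1 : ℂ) ^ n / (Complex.Gamma (ν + n + 1) * n.factorial)) * (z / 2) ^ (ν + 2 * n)

/-- Whittaker function of the first kind `M_{κ,μ}(z)`. -/
noncomputable def whittakerM (κ μ z : ℂ) : ℂ :=
  Complex.exp (-z / 2) * z ^ (μ + 1 / 2) *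
    ∑' n : ℕ, poch (μ - κ + 1 / 2) n / (poch (2 * μ + 1) n * n.factorial) * z ^ n


/-- summand of the terminating Saalschütz sum -/
noncomputable def saalT (a b : ℂ) (N m : ℕ) : ℂ :=
  if 2 * m ≤ N then
    (-1 / 4 : ℂ) ^ m * Complex.Gamma (b + N - m) * Complex.Gamma (a + m) /
      (Complex.Gamma (a + b + 1 / 2 + m) * m.factorial * (N - 2 * m).factorial)
  else 0

lemma ne_zero_of_re_pos {x : ℂ} (h : 0 < x.re) : x ≠ 0 := by
  rintro rfl
  simp at h

lemma saalT_A (a b : ℂ) (ha : 0 < a.re) (hb : 0 < b.re) (N m : ℕ) :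
    -4 * ((m : ℂ) + 1) * (a + b + 1 / 2 + m) * saalT a b (N + 1) (m + 1) =
      (a + m) * (N - 2 * m) * saalT a b N m := by
  unfold saalT
  by_cases h : 2 * m + 1 ≤ N
  · obtain ⟨k, rfl⟩ := Nat.exists_eq_add_of_le h
    rw [if_pos (by omega), if_pos (by omega)]
    have e1 : 2 * m + 1 + k + 1 - 2 * (m + 1) = k := by omega
    have e2 : 2 * m + 1 + k - 2 * m = k + 1 := by omega
    rw [e1, e2, Nat.factorial_succ, Nat.factorial_succ]
    have g1 : Complex.Gamma (a + ((m + 1 : ℕ) : ℂ)) = (a + m) * Complex.Gamma (a + m) := by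
      rw [← Complex.Gamma_add_one _ (ne_zero_of_re_pos (by simp; positivity))]
      push_cast; ring_nf
    have h0 : 0 < (a + b + 1 / 2 + (m : ℂ)).re := by simp; positivity
    have g2 : Complex.Gamma (a + b + 1 / 2 + ((m + 1 : ℕ) : ℂ)) =
        (a + b + 1 / 2 + m) * Complex.Gamma (a + b + 1 / 2 + m) := by
      rw [← Complex.Gamma_add_one _ (ne_zero_of_re_pos h0)]
      push_cast; ring_nf
    have g3 : b + ((2 * m + 1 + k + 1 : ℕ) : ℂ) - ((m + 1 : ℕ) : ℂ) =
        b + ((2 * m + 1 + k : ℕ) : ℂ) - m := by push_cast; ring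
    rw [g1, g2, g3]
    have n1 := ne_zero_of_re_pos h0
    have n2 := Complex.Gamma_ne_zero_of_re_pos h0
    have n3 : (m.factorial : ℂ) ≠ 0 := by exact_mod_cast m.factorial_ne_zero
    have n4 : (k.factorial : ℂ) ≠ 0 := by exact_mod_cast k.factorial_ne_zero
    have n5 : (m : ℂ) + 1 ≠ 0 := by exact_mod_cast m.succ_ne_zero
    have n6 : (k : ℂ) + 1 ≠ 0 := by exact_mod_cast k.succ_ne_zero
    push_cast
    generalize Complex.Gamma (a + b + 1 / 2 + m) = X at *
    generalize a + b + 1 / 2 + (m : ℂ) = Y at *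
    field_simp
    ring
  · rw [if_neg (by omega)]
    by_cases h' : 2 * m = N
    · subst h'; push_cast; ring
    · rw [if_neg (by omega)]; ring

lemma saalT_B (a b : ℂ) (hb : 0 < b.re) (N m : ℕ) :
    ((N : ℂ) + 1 - 2 * m) * saalT a b (N + 1) m = (b + N - m) * saalT a b N m := by
  unfold saalT
  by_cases h : 2 * m ≤ N
  · obtain ⟨k, rfl⟩ := Nat.exists_eq_add_of_le h
    rw [if_pos (by omega), if_pos (by omega)]
    have e1 : 2 * m + k + 1 - 2 * m = k + 1 := by omega
    have e2 : 2 * m + k - 2 * m = k := by omega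
    rw [e1, e2, Nat.factorial_succ]
    have h0 : 0 < (b + ((2 * m + k : ℕ) : ℂ) - m).re := by
      have : b + ((2 * m + k : ℕ) : ℂ) - m = b + ((m + k : ℕ) : ℂ) := by push_cast; ring
      rw [this]; simp only [Complex.add_re, Complex.natCast_re]; positivity
    have g1 : Complex.Gamma (b + ((2 * m + k + 1 : ℕ) : ℂ) - m) =
        (b + ((2 * m + k : ℕ) : ℂ) - m) * Complex.Gamma (b + ((2 * m + k : ℕ) : ℂ) - m) := by
      rw [← Complex.Gamma_add_one _ (ne_zero_of_re_pos h0)]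
      push_cast; ring_nf
    rw [g1]
    have n6 : (k : ℂ) + 1 ≠ 0 := by exact_mod_cast k.succ_ne_zero
    have e3 : ((2 * m + k : ℕ) : ℂ) + 1 - 2 * m = k + 1 := by push_cast; ring
    rw [e3]
    push_cast
    field_simp
  · rw [if_neg h]
    by_cases h' : 2 * m = N + 1
    · have : (N : ℂ) + 1 - 2 * m = 0 := by
        have : ((2 * m : ℕ) : ℂ) = ((N + 1 : ℕ) : ℂ) := by rw [h']
        push_cast at this; rw [this]; ring
      rw [this]; ring
    · rw [if_neg (by omega)]; ring

lemma saalT_rec (a b : ℂ) (ha : 0 < a.re) (hb : 0 < b.re) (N m : ℕ) :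
    ((N : ℂ) + 1) * (2 * (a + b) + N) * saalT a b (N + 1) m -
      (2 * b + N) * (a + b + N) * saalT a b N m =
    -4 * ((m + 1 : ℕ) : ℂ) * (a + b - 1 / 2 + ((m + 1 : ℕ) : ℂ)) * saalT a b (N + 1) (m + 1) -
    -4 * (m : ℂ) * (a + b - 1 / 2 + m) * saalT a b (N + 1) m := by
  have hA := saalT_A a b ha hb N m
  have hB := saalT_B a b hb N m
  have hA' : -4 * ((m + 1 : ℕ) : ℂ) * (a + b - 1 / 2 + ((m + 1 : ℕ) : ℂ)) *
      saalT a b (N + 1) (m + 1) = (a + m) * (N - 2 * m) * saalT a b N m := by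
    rw [← hA]; push_cast; ring
  rw [hA']
  by_cases h' : 2 * m = N + 1
  · have hN : (N : ℂ) = 2 * m - 1 := by
      have : ((2 * m : ℕ) : ℂ) = ((N + 1 : ℕ) : ℂ) := by rw [h']
      push_cast at this; rw [this]; ring
    have h0 : saalT a b N m = 0 := by
      unfold saalT; rw [if_neg (by omega)]
    rw [h0, hN]; ring
  · have hne : (N : ℂ) + 1 - 2 * m ≠ 0 := by
      intro h
      apply h'
      have : ((2 * m : ℕ) : ℂ) = ((N + 1 : ℕ) : ℂ) := by
        push_cast; linear_combination -h
      exact_mod_cast this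
    apply mul_left_cancel₀ hne
    linear_combination (((N : ℂ) + 1) * (2 * (a + b) + N) - 4 * m * (a + b - 1 / 2 + m)) * hB

lemma saalT_zero (a b : ℂ) (N m : ℕ) (h : N < 2 * m) : saalT a b N m = 0 := by
  unfold saalT; rw [if_neg (by omega)]

lemma poch_succ (x : ℂ) (n : ℕ) : poch x (n + 1) = poch x n * (x + n) := by
  unfold poch; rw [Finset.prod_range_succ]

lemma poch_ne (x : ℂ) (hx : 0 < x.re) (n : ℕ) : poch x n ≠ 0 := by
  unfold poch
  apply Finset.prod_ne_zero_iff.2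
  intro k _
  apply ne_zero_of_re_pos
  simp; positivity

lemma gamma_poch (x : ℂ) (hx : 0 < x.re) (n : ℕ) :
    Complex.Gamma (x + n) = Complex.Gamma x * poch x n := by
  induction n with
  | zero => simp [poch]
  | succ n ih =>
    rw [poch_succ, ← mul_assoc, ← ih, mul_comm, 
      ← Complex.Gamma_add_one _ (ne_zero_of_re_pos (by simp; positivity))]
    push_cast; ring_nf

lemma saal_sum (a b : ℂ) (ha : 0 < a.re) (hb : 0 < b.re) (N : ℕ) :
    ∑ m ∈ Finset.range (N + 1), saalT a b N m =
      Complex.Gamma a * Complex.Gamma b / Complex.Gamma (a + b + 1 / 2) *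
        (poch (2 * b) N * poch (a + b) N / (poch (2 * (a + b)) N * N.factorial)) := by
  induction N with
  | zero => simp [saalT, poch]; ring
  | succ N ih =>
    have key := Finset.sum_range_sub
      (fun m : ℕ => -4 * (m : ℂ) * (a + b - 1 / 2 + m) * saalT a b (N + 1) m) (N + 2)
    rw [Finset.sum_congr rfl (fun m _ => (saalT_rec a b ha hb N m).symm)] at key
    rw [saalT_zero a b (N + 1) (N + 2) (by omega), Finset.sum_sub_distrib, ← Finset.mul_sum,
      ← Finset.mul_sum, Finset.sum_range_succ (fun m => saalT a b N m),
      saalT_zero a b N (N + 1) (by omega), add_zero, ih] at key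
    have n1 : (N : ℂ) + 1 ≠ 0 := by exact_mod_cast N.succ_ne_zero
    have n2 : 2 * (a + b) + N ≠ 0 := by apply ne_zero_of_re_pos; simp; positivity
    have n3 : (N.factorial : ℂ) ≠ 0 := by exact_mod_cast N.factorial_ne_zero
    have n4 := poch_ne (2 * (a + b)) (by simp; positivity) N
    apply mul_left_cancel₀ (mul_ne_zero n1 n2)
    have key' := sub_eq_zero.1 (key.trans (by simp))
    rw [key', poch_succ, poch_succ, poch_succ, Nat.factorial_succ]
    push_cast
    field_simp

/-- series coefficients -/
noncomputable def cf (μ : ℂ) (z : ℝ) (m : ℕ) : ℂ :=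
  (-1 : ℂ) ^ m / (Complex.Gamma (μ + m + 1) * m.factorial) * ((z : ℂ) / 2) ^ (2 * m)

lemma cf_summable (μ : ℂ) (hμ : -(1 / 2) < μ.re) (z : ℝ) : Summable (fun m => ‖cf μ z m‖) := by
  have h0 : 0 < (μ + 1).re := by simp; linarith
  have hG := Complex.Gamma_ne_zero_of_re_pos h0
  have hp : ∀ m : ℕ, (1 / 2 : ℝ) ^ m ≤ ‖poch (μ + 1) m‖ := by
    intro m
    unfold poch
    rw [norm_prod, ← Finset.card_range m, ← Finset.prod_const, Finset.card_range]
    apply Finset.prod_le_prod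
    · intros; norm_num
    · intro i _
      refine le_trans ?_ (Complex.re_le_norm _)
      simp
      have : (0 : ℝ) ≤ i := by positivity
      linarith
  have hs := (Real.summable_pow_div_factorial (2 * (z / 2) ^ 2)).mul_left
    (‖Complex.Gamma (μ + 1)‖⁻¹)
  refine Summable.of_nonneg_of_le (fun _ => norm_nonneg _) (fun m => ?_) hs
  unfold cf
  have e : μ + m + 1 = μ + 1 + m := by ring
  rw [e, gamma_poch _ h0]
  simp only [norm_mul, norm_div, norm_pow, norm_neg, norm_one, one_pow, Complex.norm_natCast,
    Complex.norm_real, Complex.norm_ofNat]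
  have hz : (‖z‖ / 2) ^ (2 * m) = ((z / 2) ^ 2) ^ m := by
    rw [pow_mul]; congr 1; rw [div_pow, div_pow]; simp
  rw [hz, mul_pow]
  have hG' : 0 < ‖Complex.Gamma (μ + 1)‖ := norm_pos_iff.2 hG
  have hP : 0 < ‖poch (μ + 1) m‖ := norm_pos_iff.2 (poch_ne _ h0 m)
  have hinv : ‖poch (μ + 1) m‖⁻¹ ≤ 2 ^ m := by
    have := inv_anti₀ (by positivity) (hp m)
    simpa using this
  calc _ = ‖Complex.Gamma (μ + 1)‖⁻¹ * (‖poch (μ + 1) m‖⁻¹ * ((z / 2) ^ 2) ^ m / m.factorial) := by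
        field_simp
    _ ≤ _ := by gcongr

lemma cpow_real {x : ℝ} (hx : 0 < x) (w : ℂ) : (x : ℂ) ^ w = Complex.exp ((Real.log x : ℝ) * w) := by
  rw [Complex.cpow_def_of_ne_zero (by exact_mod_cast hx.ne'), Complex.ofReal_log hx.le]

lemma bessel_term (μ : ℂ) (z : ℝ) (hz : 0 < z) (ξ : ℝ) (h0 : 0 < ξ) (h1 : ξ < 1) (m : ℕ) :
    (((Real.sqrt (ξ * (1 - ξ)) : ℝ) : ℂ) * z / 2) ^ (μ + 2 * (m : ℂ)) =
      ((z / 2 : ℝ) : ℂ) ^ μ * ((z : ℂ) / 2) ^ (2 * m) *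
        ((ξ : ℂ) ^ (μ / 2 + m) * ((1 - ξ : ℝ) : ℂ) ^ (μ / 2 + m)) := by
  have h1' : 0 < 1 - ξ := by linarith
  have e : ((Real.sqrt (ξ * (1 - ξ)) : ℝ) : ℂ) * z / 2 =
      ((Real.sqrt (ξ * (1 - ξ)) * (z / 2) : ℝ) : ℂ) := by push_cast; ring
  have e2 : ((z : ℂ) / 2) ^ (2 * m) = ((z / 2 : ℝ) : ℂ) ^ ((2 * m : ℕ) : ℂ) := by
    rw [Complex.cpow_natCast]; push_cast; rfl
  have hs : 0 < Real.sqrt (ξ * (1 - ξ)) := Real.sqrt_pos.2 (by positivity)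
  rw [e, e2, cpow_real (by positivity), cpow_real (by positivity), cpow_real (by positivity),
    cpow_real h0, cpow_real h1', ← Complex.exp_add, ← Complex.exp_add, ← Complex.exp_add,
    Real.log_mul hs.ne' (by positivity), Real.log_sqrt (by positivity),
    Real.log_mul h0.ne' h1'.ne']
  push_cast
  ring_nf

/-- the integrand expanded in a double series -/
noncomputable def dterm (a b μ : ℂ) (z : ℝ) (p : ℕ × ℕ) (ξ : ℝ) : ℂ :=
  cf μ z p.1 * ((z : ℂ) ^ p.2 / p.2.factorial) *
    ((ξ : ℂ) ^ (b + p.1 + p.2 - 1) * (1 - (ξ : ℂ)) ^ (a + p.1 - 1))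

lemma exp_has (w : ℂ) : HasSum (fun k : ℕ => w ^ k / k.factorial) (Complex.exp w) := by
  rw [Complex.exp_eq_exp_ℂ]
  exact NormedSpace.expSeries_div_hasSum_exp w

lemma hasSum_of_eqs {ι : Type} {f g : ι → ℂ} {x y : ℂ} (h : HasSum f x) (hfg : ∀ p, g p = f p)
    (hxy : y = x) : HasSum g y := by
  rw [hxy, funext hfg]; exact h

lemma hasSum_prod_aux {f g : ℕ → ℂ} {y : ℂ} (hf : Summable (fun n => ‖f n‖))
    (hg : Summable (fun n => ‖g n‖)) (hy : HasSum g y) :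
    HasSum (fun p : ℕ × ℕ => f p.1 * g p.2) ((∑' n, f n) * y) := by
  have h3 : Summable (fun p : ℕ × ℕ => f p.1 * g p.2) := summable_mul_of_summable_norm hf hg
  have h1 : HasSum f (∑' n, f n) := (Summable.of_norm hf).hasSum
  exact HasSum.mul h1 hy h3

lemma integrand_hasSum (κ μ : ℂ) (hμ : -(1 / 2) < μ.re) (z : ℝ) (hz : 0 < z) (ξ : ℝ)
    (h0 : 0 < ξ) (h1 : ξ < 1) :
    HasSum (fun p => ((z / 2 : ℝ) : ℂ) ^ μ *
        dterm ((μ + κ + 1 / 2) / 2) ((μ - κ + 1 / 2) / 2) μ z p ξ)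
      ((ξ : ℂ) ^ ((-κ + 1 / 2) / 2 - 1) * ((1 : ℂ) - (ξ : ℂ)) ^ ((κ + 1 / 2) / 2 - 1) *
              Complex.exp ((ξ : ℂ) * z) *
              besselJ μ ((Real.sqrt (ξ * (1 - ξ)) : ℂ) * z)) := by
  have h1' : 0 < 1 - ξ := by linarith
  have hξ : (ξ : ℂ) ≠ 0 := by exact_mod_cast h0.ne'
  have hη : ((1 - ξ : ℝ) : ℂ) ≠ 0 := by exact_mod_cast h1'.ne'
  have hc : (1 : ℂ) - (ξ : ℂ) = ((1 - ξ : ℝ) : ℂ) := by push_cast; rfl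
  have hterm : ∀ m : ℕ, ((-1 : ℂ) ^ m / (Complex.Gamma (μ + m + 1) * m.factorial)) *
      (((Real.sqrt (ξ * (1 - ξ)) : ℝ) : ℂ) * z / 2) ^ (μ + 2 * (m : ℂ)) =
      (((z / 2 : ℝ) : ℂ) ^ μ * (ξ : ℂ) ^ (μ / 2) * ((1 - ξ : ℝ) : ℂ) ^ (μ / 2)) *
        (cf μ z m * ((ξ : ℂ) * ((1 - ξ : ℝ) : ℂ)) ^ m) := by
    intro m
    rw [bessel_term μ z hz ξ h0 h1, Complex.cpow_add _ _ hξ, Complex.cpow_add _ _ hη,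
      Complex.cpow_natCast, Complex.cpow_natCast, mul_pow]
    unfold cf
    ring
  have hn : Summable (fun m => ‖cf μ z m * ((ξ : ℂ) * ((1 - ξ : ℝ) : ℂ)) ^ m‖) := by
    refine Summable.of_nonneg_of_le (fun _ => norm_nonneg _) (fun m => ?_) (cf_summable μ hμ z)
    rw [norm_mul]
    apply mul_le_of_le_one_right (norm_nonneg _)
    rw [norm_pow]
    apply pow_le_one₀ (norm_nonneg _)
    rw [norm_mul, Complex.norm_real, Complex.norm_real, Real.norm_of_nonneg h0.le,
      Real.norm_of_nonneg h1'.le]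
    nlinarith
  have he := exp_has ((ξ : ℂ) * z)
  have hen : Summable (fun k : ℕ => ‖((ξ : ℂ) * z) ^ k / (k.factorial : ℂ)‖) := by
    have := Real.summable_pow_div_factorial (‖(ξ : ℂ) * z‖)
    simpa using this
  have hprod := hasSum_prod_aux hn hen he
  have hb : besselJ μ ((Real.sqrt (ξ * (1 - ξ)) : ℂ) * z) =
      (((z / 2 : ℝ) : ℂ) ^ μ * (ξ : ℂ) ^ (μ / 2) * ((1 - ξ : ℝ) : ℂ) ^ (μ / 2)) *
        ∑' m, (cf μ z m * ((ξ : ℂ) * ((1 - ξ : ℝ) : ℂ)) ^ m) := by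
    rw [← tsum_mul_left]
    exact tsum_congr hterm
  rw [hb, hc]
  have := hprod.mul_left ((ξ : ℂ) ^ ((-κ + 1 / 2) / 2 - 1) *
    ((1 - ξ : ℝ) : ℂ) ^ ((κ + 1 / 2) / 2 - 1) * (((z / 2 : ℝ) : ℂ) ^ μ * (ξ : ℂ) ^ (μ / 2) *
      ((1 - ξ : ℝ) : ℂ) ^ (μ / 2)))
  refine hasSum_of_eqs this ?_ ?_
  · intro p
    obtain ⟨m, k⟩ := p
    unfold dterm
    simp only
    have x1 : (ξ : ℂ) ^ ((μ - κ + 1 / 2) / 2 + m + k - 1) =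
        (ξ : ℂ) ^ ((-κ + 1 / 2) / 2 - 1) * (ξ : ℂ) ^ (μ / 2) * (ξ : ℂ) ^ m * (ξ : ℂ) ^ k := by
      rw [← Complex.cpow_natCast, ← Complex.cpow_natCast, ← Complex.cpow_add _ _ hξ,
        ← Complex.cpow_add _ _ hξ, ← Complex.cpow_add _ _ hξ]
      ring_nf
    have x2 : ((1 - ξ : ℝ) : ℂ) ^ ((μ + κ + 1 / 2) / 2 + m - 1) =
        ((1 - ξ : ℝ) : ℂ) ^ ((κ + 1 / 2) / 2 - 1) * ((1 - ξ : ℝ) : ℂ) ^ (μ / 2) *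
          ((1 - ξ : ℝ) : ℂ) ^ m := by
      rw [← Complex.cpow_natCast, ← Complex.cpow_add _ _ hη, ← Complex.cpow_add _ _ hη]
      ring_nf
    rw [hc, x1, x2, mul_pow, mul_pow]
    ring
  · ring

lemma dterm_integral (a b μ : ℂ) (z : ℝ) (ha : 0 < a.re) (hb : 0 < b.re)
    (hs : μ = a + b - 1 / 2) (m k : ℕ) :
    ∫ ξ in (0:ℝ)..1, dterm a b μ z (m, k) ξ =
      (z : ℂ) ^ (2 * m + k) / Complex.Gamma (a + b + (2 * m + k : ℕ)) *
        saalT a b (2 * m + k) m := by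
  unfold dterm
  rw [intervalIntegral.integral_const_mul]
  have hB := Complex.Gamma_mul_Gamma_eq_betaIntegral (s := b + m + k) (t := a + m)
    (by simp; positivity) (by simp; positivity)
  unfold Complex.betaIntegral at hB
  have e : b + m + k + (a + m) = a + b + (2 * m + k : ℕ) := by push_cast; ring
  rw [e] at hB
  have hne : Complex.Gamma (a + b + (2 * m + k : ℕ)) ≠ 0 :=
    Complex.Gamma_ne_zero_of_re_pos (by
      simp only [Complex.add_re, Complex.natCast_re]; positivity)
  simp only
  rw [(mul_comm _ _).trans (mul_right_cancel₀ hne ?_ : _ = Complex.Gamma (b + m + k) * Complex.Gamma (a + m) / Complex.Gamma (a + b + (2 * m + k : ℕ)) * (cf μ z m * ((z : ℂ) ^ k / k.factorial)))]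
  · unfold saalT cf
    rw [if_pos (by omega)]
    have e2 : b + ((2 * m + k : ℕ) : ℂ) - m = b + m + k := by push_cast; ring
    have e3 : μ + m + 1 = a + b + 1 / 2 + m := by rw [hs]; ring
    have e4 : 2 * m + k - 2 * m = k := by omega
    have e5 : ((z : ℂ) / 2) ^ (2 * m) = (z : ℂ) ^ (2 * m) * (1 / 4) ^ m := by
      rw [div_eq_mul_inv, mul_pow, pow_mul (2 : ℂ)⁻¹]; norm_num
    have e6 : (-1 / 4 : ℂ) ^ m = (-1) ^ m * (1 / 4) ^ m := by rw [← mul_pow]; norm_num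
    rw [e2, e3, e4, e5, e6, pow_add]
    simp only [div_eq_mul_inv, mul_inv]
    ring
  · rw [div_mul_eq_mul_div, div_mul_cancel₀ _ hne, hB]
    ring

lemma dterm_hasSum (κ μ : ℂ) (z : ℝ) (hz : 0 < z)
    (h₁ : 0 < ((μ + κ + 1 / 2) / 2).re) (h₂ : 0 < ((μ - κ + 1 / 2) / 2).re)
    (hμ : -(1 / 2) < μ.re) :
    HasSum (fun p => ∫ ξ in (0:ℝ)..1, ((z / 2 : ℝ) : ℂ) ^ μ *
        dterm ((μ + κ + 1 / 2) / 2) ((μ - κ + 1 / 2) / 2) μ z p ξ)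
      (∫ ξ in (0:ℝ)..1, (ξ : ℂ) ^ ((-κ + 1 / 2) / 2 - 1) *
        ((1 : ℂ) - (ξ : ℂ)) ^ ((κ + 1 / 2) / 2 - 1) *
              Complex.exp ((ξ : ℂ) * z) *
              besselJ μ ((Real.sqrt (ξ * (1 - ξ)) : ℂ) * z)) := by
  set a := (μ + κ + 1 / 2) / 2
  set b := (μ - κ + 1 / 2) / 2
  have hbase := Complex.betaIntegral_convergent h₂ h₁
  have hS : Summable (fun p : ℕ × ℕ => ‖cf μ z p.1 * ((z : ℂ) ^ p.2 / p.2.factorial)‖) := by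
    have hen : Summable (fun k : ℕ => ‖(z : ℂ) ^ k / (k.factorial : ℂ)‖) := by
      have := Real.summable_pow_div_factorial (‖(z : ℂ)‖)
      simpa using this
    have := (cf_summable μ hμ z).mul_of_nonneg hen (fun _ => norm_nonneg _) (fun _ => norm_nonneg _)
    simpa only [norm_mul] using this
  have hne1 : ∀ᵐ ξ : ℝ, ξ ≠ 1 := by simp [MeasureTheory.ae_iff]
  refine intervalIntegral.hasSum_integral_of_dominated_convergence
    (fun p ξ => ‖cf μ z p.1 * ((z : ℂ) ^ p.2 / p.2.factorial)‖ *
      (‖((z / 2 : ℝ) : ℂ) ^ μ‖ * ‖(ξ : ℂ) ^ (b - 1) * (1 - (ξ : ℂ)) ^ (a - 1)‖)) ?_ ?_ ?_ ?_ ?_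
  · intro p
    apply Measurable.aestronglyMeasurable
    unfold dterm
    fun_prop
  · intro p
    filter_upwards [hne1] with ξ h1 hm
    rw [Set.uIoc_of_le zero_le_one] at hm
    have h0 := hm.1
    have h1 : 0 < 1 - ξ := by
      have := lt_of_le_of_ne hm.2 h1
      linarith
    have hc : (1 : ℂ) - (ξ : ℂ) = ((1 - ξ : ℝ) : ℂ) := by push_cast; rfl
    unfold dterm
    have l1 : ‖(ξ : ℂ) ^ (b + p.1 + p.2 - 1)‖ ≤ ‖(ξ : ℂ) ^ (b - 1)‖ := by
      rw [Complex.norm_cpow_eq_rpow_re_of_pos h0, Complex.norm_cpow_eq_rpow_re_of_pos h0]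
      apply Real.rpow_le_rpow_of_exponent_ge h0 hm.2
      simp only [Complex.sub_re, Complex.add_re, Complex.natCast_re]
      have : (0 : ℝ) ≤ p.1 := by positivity
      have : (0 : ℝ) ≤ p.2 := by positivity
      linarith
    have l2 : ‖((1 - ξ : ℝ) : ℂ) ^ (a + p.1 - 1)‖ ≤ ‖((1 - ξ : ℝ) : ℂ) ^ (a - 1)‖ := by
      rw [Complex.norm_cpow_eq_rpow_re_of_pos h1, Complex.norm_cpow_eq_rpow_re_of_pos h1]
      apply Real.rpow_le_rpow_of_exponent_ge h1 (by linarith)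
      simp only [Complex.sub_re, Complex.add_re, Complex.natCast_re]
      have : (0 : ℝ) ≤ p.1 := by positivity
      linarith
    rw [hc, mul_left_comm, norm_mul (cf μ z p.1 * _), norm_mul (((z / 2 : ℝ) : ℂ) ^ μ),
      norm_mul ((ξ : ℂ) ^ (b + p.1 + p.2 - 1)), norm_mul ((ξ : ℂ) ^ (b - 1))]
    gcongr
  · filter_upwards with ξ _
    exact hS.mul_right _
  · simp_rw [tsum_mul_right]
    exact (hbase.norm.const_mul _).const_mul _
  · filter_upwards [hne1] with ξ h1 hm
    rw [Set.uIoc_of_le zero_le_one] at hm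
    exact integrand_hasSum κ μ hμ z hz ξ hm.1 (lt_of_le_of_ne hm.2 h1)

/-- Integral representation of the Whittaker function of the first kind. -/
theorem whittakerM_integral_repr (κ μ : ℂ) (z : ℝ) (hz : 0 < z)
    (h₁ : 0 < (μ + κ + 1 / 2).re) (h₂ : 0 < (μ - κ + 1 / 2).re) :
    whittakerM κ μ z =
      (Real.sqrt π * Complex.Gamma (2 * μ + 1)) /
          ((2 : ℂ) ^ μ * Complex.Gamma ((μ + κ + 1 / 2) / 2) *
            Complex.Gamma ((μ - κ + 1 / 2) / 2)) *
        ((Real.sqrt z : ℂ) *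
          ∫ ξ in (0:ℝ)..1,
            (ξ : ℂ) ^ ((-κ + 1 / 2) / 2 - 1) * ((1 : ℂ) - (ξ : ℂ)) ^ ((κ + 1 / 2) / 2 - 1) *
              Complex.exp (((ξ : ℂ) - 1 / 2) * z) *
              besselJ μ ((Real.sqrt (ξ * (1 - ξ)) : ℂ) * z)) := by
  have ha : 0 < ((μ + κ + 1 / 2) / 2).re := by
    rw [Complex.div_ofNat_re]; exact div_pos h₁ (by norm_num)
  have hb : 0 < ((μ - κ + 1 / 2) / 2).re := by
    rw [Complex.div_ofNat_re]; exact div_pos h₂ (by norm_num)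
  have hμ : -(1 / 2) < μ.re := by
    simp at h₁ h₂; linarith
  have H := dterm_hasSum κ μ z hz ha hb hμ
  have hI : (∫ ξ in (0:ℝ)..1,
            (ξ : ℂ) ^ ((-κ + 1 / 2) / 2 - 1) * ((1 : ℂ) - (ξ : ℂ)) ^ ((κ + 1 / 2) / 2 - 1) *
              Complex.exp (((ξ : ℂ) - 1 / 2) * z) *
              besselJ μ ((Real.sqrt (ξ * (1 - ξ)) : ℂ) * z)) =
      Complex.exp (-z / 2) * ∫ ξ in (0:ℝ)..1,
            (ξ : ℂ) ^ ((-κ + 1 / 2) / 2 - 1) * ((1 : ℂ) - (ξ : ℂ)) ^ ((κ + 1 / 2) / 2 - 1) *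
              Complex.exp ((ξ : ℂ) * z) *
              besselJ μ ((Real.sqrt (ξ * (1 - ξ)) : ℂ) * z) := by
    rw [← intervalIntegral.integral_const_mul]
    congr 1
    ext ξ
    have : ((ξ : ℂ) - 1 / 2) * z = -z / 2 + ξ * z := by ring
    rw [this, Complex.exp_add]
    ring
  rw [hI]
  generalize (∫ ξ in (0:ℝ)..1,
            (ξ : ℂ) ^ ((-κ + 1 / 2) / 2 - 1) * ((1 : ℂ) - (ξ : ℂ)) ^ ((κ + 1 / 2) / 2 - 1) *
              Complex.exp ((ξ : ℂ) * z) *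
              besselJ μ ((Real.sqrt (ξ * (1 - ξ)) : ℂ) * z)) = I at H ⊢
  unfold whittakerM
  have ea : μ - κ + 1 / 2 = 2 * ((μ - κ + 1 / 2) / 2) := by ring
  have es : (μ + κ + 1 / 2) / 2 + (μ - κ + 1 / 2) / 2 = μ + 1 / 2 := by ring
  rw [show poch (μ - κ + 1 / 2) = poch (2 * ((μ - κ + 1 / 2) / 2)) by rw [← ea]]
  generalize (μ + κ + 1 / 2) / 2 = a at *
  generalize (μ - κ + 1 / 2) / 2 = b at *
  have hs : μ = a + b - 1 / 2 := by rw [es]; ring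
  have hab : 0 < (a + b).re := by simp; positivity
  simp_rw [intervalIntegral.integral_const_mul] at H
  -- regroup
  let T : ℕ × ℕ → ℂ := fun q => ((z / 2 : ℝ) : ℂ) ^ μ *
    ((z : ℂ) ^ q.1 / Complex.Gamma (a + b + q.1) * saalT a b q.1 q.2)
  let i : ℕ × ℕ → ℕ × ℕ := fun p => (2 * p.1 + p.2, p.1)
  have hi : Function.Injective i := by
    rintro ⟨m, k⟩ ⟨m', k'⟩ h
    simp only [i, Prod.mk.injEq] at h ⊢
    omega
  have hT : HasSum T I := by
    rw [← hi.hasSum_iff]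
    · convert! H using 1
      ext ⟨m, k⟩
      simp only [T, i, Function.comp]
      rw [dterm_integral a b μ z ha hb hs]
    · rintro ⟨N, m⟩ hq
      simp only [T]
      rw [saalT_zero, mul_zero, mul_zero]
      by_contra hcon
      apply hq
      refine ⟨(m, N - 2 * m), ?_⟩
      simp only [i, Prod.mk.injEq, and_true]
      omega
  have hF : HasSum (fun N : ℕ => ((z / 2 : ℝ) : ℂ) ^ μ * ((z : ℂ) ^ N /
      Complex.Gamma (a + b + N) * ∑ m ∈ Finset.range (N + 1), saalT a b N m)) I := by
    refine hT.prod_fiberwise (fun N => ?_)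
    simp only [T]
    refine HasSum.mul_left _ (HasSum.mul_left _ ?_)
    apply hasSum_sum_of_ne_finset_zero
    intro m hm
    apply saalT_zero
    simp at hm
    omega
  have hG0 := Complex.Gamma_ne_zero_of_re_pos hab
  have hG1 : Complex.Gamma (a + b + 1 / 2) ≠ 0 :=
    Complex.Gamma_ne_zero_of_re_pos (by simp; positivity)
  have hIeq : I = ((z / 2 : ℝ) : ℂ) ^ μ * (Complex.Gamma a * Complex.Gamma b /
      (Complex.Gamma (a + b) * Complex.Gamma (a + b + 1 / 2))) *
      ∑' n : ℕ, poch (2 * b) n / (poch (2 * μ + 1) n * n.factorial) * (z : ℂ) ^ n := by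
    rw [← hF.tsum_eq, ← tsum_mul_left]
    apply tsum_congr
    intro N
    have e : 2 * μ + 1 = 2 * (a + b) := by rw [hs]; ring
    rw [saal_sum a b ha hb, gamma_poch _ hab, e]
    have := poch_ne _ hab N
    field_simp
  rw [hIeq]
  have hdup := Complex.Gamma_mul_Gamma_add_half (a + b)
  have e : 2 * μ + 1 = 2 * (a + b) := by rw [hs]; ring
  have hga := Complex.Gamma_ne_zero_of_re_pos ha
  have hgb := Complex.Gamma_ne_zero_of_re_pos hb
  have hg2 : Complex.Gamma (2 * (a + b)) ≠ 0 :=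
    Complex.Gamma_ne_zero_of_re_pos (by simp; positivity)
  have hpi : ((Real.sqrt π : ℝ) : ℂ) ≠ 0 := by
    exact_mod_cast (Real.sqrt_pos.2 Real.pi_pos).ne'
  have hzp : (z : ℂ) ^ (μ + 1 / 2) * (2 : ℂ) ^ (1 - 2 * (a + b)) * (2 : ℂ) ^ μ =
      ((Real.sqrt z : ℝ) : ℂ) * ((z / 2 : ℝ) : ℂ) ^ μ := by
    have : ((Real.sqrt z : ℝ) : ℂ) = (Real.sqrt z : ℝ) ^ (1 : ℂ) := by simp
    rw [this, show (2 : ℂ) = ((2 : ℝ) : ℂ) by simp, cpow_real hz, cpow_real two_pos,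
      cpow_real two_pos, cpow_real (Real.sqrt_pos.2 hz), cpow_real (by positivity),
      Real.log_sqrt hz.le, Real.log_div hz.ne' two_ne_zero, ← Complex.exp_add, ← Complex.exp_add,
      ← Complex.exp_add]
    congr 1
    rw [hs]
    push_cast
    ring
  have h2 : (2 : ℂ) ^ μ ≠ 0 := by simp [Complex.cpow_eq_zero_iff]
  have h3 : (2 : ℂ) ^ (1 - 2 * (a + b)) ≠ 0 := by simp [Complex.cpow_eq_zero_iff]
  rw [hdup]
  generalize (∑' n : ℕ, poch (2 * b) n / (poch (2 * μ + 1) n * n.factorial) * (z : ℂ) ^ n) = S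
  rw [e]
  have hzp' : (z : ℂ) ^ (μ + 1 / 2) = ((Real.sqrt z : ℝ) : ℂ) * ((z / 2 : ℝ) : ℂ) ^ μ /
      ((2 : ℂ) ^ (1 - 2 * (a + b)) * (2 : ℂ) ^ μ) := by
    rw [← hzp]; field_simp
  rw [hzp']
  generalize (2 : ℂ) ^ (1 - 2 * (a + b)) = P at *
  generalize (2 : ℂ) ^ μ = Q at *
  generalize ((z / 2 : ℝ) : ℂ) ^ μ = R at *
  generalize Complex.Gamma (2 * (a + b)) = W at *
  field_simp
end

section
/- Let κ, μ be complex numbers with Re(μ + κ + 1/2) > 0 and Re(μ − κ + 1/2) > 0, and define for z > 0: y(z) = √z · ∫₀¹ ξ^{(−κ+1/2)/2 − 1} (1−ξ)^{(κ+1/2)/2 − 1} e^{(ξ−1/2)z} J_μ(√(ξ(1−ξ)) · z) dξ. Then y satisfies the Whittaker differential equation y''(z) + (−1/4 + κ/z + (1/4 − μ²)/z²) · y(z) = 0 for all z > 0. -/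
open Filter Topology MeasureTheory intervalIntegral

namespace WhitAux

/-- Coefficients dominated by `C / n!`. -/
def Dom (c : ℕ → ℂ) : Prop := ∃ C : ℝ, ∀ n, ‖c n‖ ≤ C / n.factorial

noncomputable def S (c : ℕ → ℂ) (w : ℂ) : ℂ := ∑' n, c n * w ^ n

def sh (c : ℕ → ℂ) (n : ℕ) : ℂ := (n + 1 : ℂ) * c (n + 1)

lemma Dom.sh {c : ℕ → ℂ} (h : Dom c) : Dom (sh c) := by
  obtain ⟨C, hC⟩ := h
  refine ⟨C, fun n => ?_⟩
  have h1 : ‖(n + 1 : ℂ)‖ = n + 1 := by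
    have := Complex.norm_natCast (n + 1)
    push_cast at this
    exact this
  rw [WhitAux.sh, norm_mul, h1]
  calc ((n : ℝ) + 1) * ‖c (n + 1)‖ ≤ (n + 1) * (C / (n + 1).factorial) := by
        gcongr; exact hC _
    _ = C / n.factorial := by
        rw [Nat.factorial_succ]; push_cast
        have : (n.factorial : ℝ) ≠ 0 := by positivity
        field_simp

lemma Dom.summable {c : ℕ → ℂ} (h : Dom c) (w : ℂ) : Summable fun n => c n * w ^ n := by
  obtain ⟨C, hC⟩ := h
  refine Summable.of_norm_bounded (g := fun n : ℕ => C * (‖w‖ ^ n / n.factorial))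
    ((Real.summable_pow_div_factorial ‖w‖).mul_left C) fun n => ?_
  rw [norm_mul, norm_pow]
  calc ‖c n‖ * ‖w‖ ^ n ≤ C / n.factorial * ‖w‖ ^ n := by gcongr; exact hC n
    _ = _ := by ring

lemma Dom.hasDerivAt {c : ℕ → ℂ} (h : Dom c) (w : ℂ) :
    HasDerivAt (S c) (S (WhitAux.sh c) w) w := by
  have hs := h.sh
  obtain ⟨C, hC⟩ := id hs
  set R : ℝ := ‖w‖ + 1
  have key : HasDerivAt (fun z => ∑' n : ℕ, c n * z ^ n)
      (∑' n : ℕ, c n * (n * w ^ (n - 1))) w := by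
    refine hasDerivAt_tsum_of_isPreconnected (𝕜 := ℂ)
      (g := fun n z => c n * z ^ n) (g' := fun n z => c n * (n * z ^ (n - 1)))
      (u := fun n : ℕ => if n = 0 then 0 else C * (R ^ (n - 1) / (n - 1).factorial))
      (t := Metric.ball 0 R) (y₀ := w) ?_ Metric.isOpen_ball
      (convex_ball _ _).isPreconnected ?_ ?_ ?_ (h.summable w) ?_
    · rw [← summable_nat_add_iff 1]
      simpa using (Real.summable_pow_div_factorial R).mul_left C
    · intro n y _
      exact (hasDerivAt_pow n y).const_mul (c n)
    · intro n y hy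
      have hy' : ‖y‖ ≤ R := by simpa using (Metric.mem_ball.1 hy).le
      cases n with
      | zero => simp
      | succ n =>
        have := hC n
        simp only [WhitAux.sh] at this
        simp only [Nat.add_sub_cancel, Nat.succ_ne_zero, if_false]
        calc _ = ‖((n + 1 : ℂ) * c (n + 1))‖ * ‖y‖ ^ n := by
              rw [← norm_pow, ← norm_mul]; congr 1; push_cast; ring
          _ ≤ C / n.factorial * R ^ n := by gcongr; exact le_trans (norm_nonneg _) this
          _ = _ := by ring
    · simp [R]
    · simp [R]
  refine HasDerivAt.congr_deriv key ?_
  have hsum : Summable fun n : ℕ => c n * (n * w ^ (n - 1)) := by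
    rw [← summable_nat_add_iff 1]
    refine (hs.summable w).congr fun n => ?_
    simp [WhitAux.sh]; ring
  rw [hsum.tsum_eq_zero_add]
  simp only [S, WhitAux.sh]
  simp
  congr 1; ext n; ring

noncomputable def cf (μ : ℂ) (n : ℕ) : ℂ :=
  (-1 : ℂ) ^ n / (Complex.Gamma (μ + n + 1) * n.factorial * 4 ^ n)

lemma mu_ne {μ : ℂ} (hμ : -1 / 2 < μ.re) (n : ℕ) : μ + n + 1 ≠ 0 := by
  intro h
  have := congrArg Complex.re h
  simp at this
  have : (0 : ℝ) ≤ n := n.cast_nonneg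
  linarith

lemma cf_succ {μ : ℂ} (hμ : -1 / 2 < μ.re) (n : ℕ) :
    (μ + n + 1) * ((n + 1 : ℂ) * cf μ (n + 1)) = - cf μ n / 4 := by
  have h1 := mu_ne hμ n
  have h2 : Complex.Gamma (μ + n + 1) ≠ 0 := by
    apply Complex.Gamma_ne_zero_of_re_pos
    simp
    have : (0 : ℝ) ≤ n := n.cast_nonneg
    linarith
  have h3 : Complex.Gamma (μ + (n + 1 : ℕ) + 1) = (μ + n + 1) * Complex.Gamma (μ + n + 1) := by
    rw [← Complex.Gamma_add_one _ h1]; push_cast; congr 1; ring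
  have h4 : (n.factorial : ℂ) ≠ 0 := by exact_mod_cast n.factorial_ne_zero
  have h5 : (n + 1 : ℂ) ≠ 0 := by exact_mod_cast n.succ_ne_zero
  rw [cf, cf, h3, Nat.factorial_succ, pow_succ, pow_succ]
  push_cast
  field_simp

lemma cf_dom {μ : ℂ} (hμ : -1 / 2 < μ.re) : Dom (cf μ) := by
  refine ⟨‖cf μ 0‖, fun n => ?_⟩
  induction n with
  | zero => simp
  | succ n ih =>
    have h := congrArg norm (cf_succ hμ n)
    have h1 : ‖(n + 1 : ℂ)‖ = n + 1 := by
      have := Complex.norm_natCast (n + 1)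
      push_cast at this
      exact this
    rw [norm_mul, norm_mul, norm_div, norm_neg, h1] at h
    have h2 : (1 / 2 : ℝ) ≤ ‖μ + n + 1‖ := by
      refine le_trans ?_ (Complex.re_le_norm _)
      simp
      have : (0 : ℝ) ≤ n := n.cast_nonneg
      linarith
    have h3 : ((n : ℝ) + 1) * ‖cf μ (n + 1)‖ ≤ ‖cf μ n‖ := by
      have h4 : (0 : ℝ) ≤ ((n : ℝ) + 1) * ‖cf μ (n + 1)‖ := by positivity
      have h5 : ‖(4 : ℂ)‖ = 4 := by simp
      rw [h5] at h
      nlinarith [norm_nonneg (cf μ n)]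
    rw [Nat.factorial_succ, le_div_iff₀ (by positivity)]
    rw [le_div_iff₀ (by positivity)] at ih
    push_cast
    have : (0 : ℝ) < n.factorial := by positivity
    nlinarith

lemma HasSum.congr_fun' {f g : ℕ → ℂ} {a : ℂ} (h : ∀ n, f n = g n) (hg : HasSum g a) :
    HasSum f a := by
  rwa [funext h]

lemma G_ode {μ : ℂ} (hμ : -1 / 2 < μ.re) (w : ℂ) :
    w * S (sh (sh (cf μ))) w + (μ + 1) * S (sh (cf μ)) w + S (cf μ) w / 4 = 0 := by
  have d0 := cf_dom hμ
  have a0 := (d0.summable w).hasSum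
  have a1 := (d0.sh.summable w).hasSum
  have a2 := (d0.sh.sh.summable w).hasSum
  have b2 : HasSum (fun n : ℕ => (n : ℂ) * sh (cf μ) n * w ^ n) (w * S (sh (sh (cf μ))) w) := by
    rw [← hasSum_nat_add_iff' 1]
    simp only [Finset.sum_range_one, Nat.cast_zero, zero_mul, sub_zero]
    refine HasSum.congr_fun' ?_ (a2.mul_left w)
    intro n
    simp only [sh]; push_cast; ring
  have := (b2.add (a1.mul_left (μ + 1))).add (a0.div_const 4)
  have h0 : HasSum (fun _ : ℕ => (0 : ℂ)) (w * S (sh (sh (cf μ))) w + (μ + 1) * S (sh (cf μ)) w + S (cf μ) w / 4) := by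
    refine HasSum.congr_fun' ?_ this
    intro n
    have := cf_succ hμ n
    simp only [sh]
    linear_combination (-w ^ n) * this
  exact h0.unique hasSum_zero

/-- Differentiation under the integral sign. -/
lemma hasDerivAt_wint {φ : ℝ → ℂ} (hφ : IntervalIntegrable φ volume 0 1)
    {f f' : ℝ → ℂ → ℂ} (hf : Continuous fun p : ℝ × ℂ => f p.1 p.2)
    (hf' : Continuous fun p : ℝ × ℂ => f' p.1 p.2)
    (hd : ∀ x z, HasDerivAt (f x) (f' x z) z) (z : ℂ) :
    HasDerivAt (fun z => ∫ x in (0:ℝ)..1, φ x * f x z) (∫ x in (0:ℝ)..1, φ x * f' x z) z := by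
  have hi : ∀ {g : ℝ → ℂ}, Continuous g → IntervalIntegrable (fun x => φ x * g x) volume 0 1 :=
    fun hg => hφ.mul_continuousOn hg.continuousOn
  have c1 : ∀ z, Continuous fun x => f x z := fun z => hf.comp (by fun_prop : Continuous fun x : ℝ => (x, z))
  have c2 : ∀ z, Continuous fun x => f' x z := fun z => hf'.comp (by fun_prop : Continuous fun x : ℝ => (x, z))
  have hK : IsCompact (Set.Icc (0:ℝ) 1 ×ˢ Metric.closedBall z 1) :=
    isCompact_Icc.prod (isCompact_closedBall z 1)
  obtain ⟨M, hM⟩ := hK.exists_bound_of_continuousOn hf'.continuousOn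
  refine (intervalIntegral.hasDerivAt_integral_of_dominated_loc_of_deriv_le
    (μ := volume) (F := fun z x => φ x * f x z) (F' := fun z x => φ x * f' x z) (bound := fun x => ‖φ x‖ * M)
    (Metric.ball_mem_nhds z one_pos) ?_ (hi (c1 z)) ?_ ?_ ?_ ?_).2
  · exact Eventually.of_forall fun y => (hi (c1 y)).def'.aestronglyMeasurable
  · exact (hi (c2 z)).def'.aestronglyMeasurable
  · refine Eventually.of_forall fun x hx y hy => ?_
    rw [norm_mul]
    gcongr
    rw [Set.uIoc_of_le zero_le_one] at hx
    exact hM (x, y) ⟨⟨hx.1.le, hx.2⟩, Metric.ball_subset_closedBall hy⟩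
  · exact hφ.norm.mul_const M
  · exact Eventually.of_forall fun x _ y _ => (hd x y).const_mul _

lemma besselJ_eq (μ : ℂ) {x : ℝ} (hx : 0 < x) :
    besselJ μ x = ((x : ℂ) / 2) ^ μ * S (cf μ) ((x : ℂ) ^ 2) := by
  have hx0 : (x : ℂ) / 2 ≠ 0 := by
    simp [hx.ne']
  rw [besselJ, S, ← tsum_mul_left]
  congr 1; ext n
  rw [Complex.cpow_add _ _ hx0]
  have : ((x : ℂ) / 2) ^ (2 * (n : ℂ)) = ((x : ℂ) ^ 2) ^ n / 4 ^ n := by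
    have h : (2 * (n : ℂ)) = ((2 * n : ℕ) : ℂ) := by push_cast; rfl
    rw [h, Complex.cpow_natCast, pow_mul, div_pow, div_pow]; norm_num
  rw [this, cf]
  simp only [div_eq_mul_inv, mul_inv]
  ring

lemma sqrt_cpow (μ : ℂ) {x : ℝ} (hx : 0 < x) : ((√x : ℝ) : ℂ) ^ μ = (x : ℂ) ^ (μ / 2) := by
  have h : (x : ℂ) = (√x : ℝ) * (√x : ℝ) := by
    rw [← Complex.ofReal_mul, Real.mul_self_sqrt hx.le]
  have h0 : ((√x : ℝ) : ℂ) ≠ 0 := by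
    rw [Complex.ofReal_ne_zero]; exact (Real.sqrt_pos.2 hx).ne'
  conv_rhs => rw [h]
  rw [Complex.mul_cpow_ofReal_nonneg (Real.sqrt_nonneg _) (Real.sqrt_nonneg _),
    ← Complex.cpow_add _ _ h0]
  congr 1; ring

noncomputable def H (μ : ℂ) (x : ℝ) (z : ℂ) : ℂ :=
  Complex.exp (x * z) * S (cf μ) (x * (1 - x) * z ^ 2)

noncomputable def H1 (μ : ℂ) (x : ℝ) (z : ℂ) : ℂ :=
  Complex.exp (x * z) * (x * S (cf μ) (x * (1 - x) * z ^ 2)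
    + 2 * (x * (1 - x)) * z * S (sh (cf μ)) (x * (1 - x) * z ^ 2))

noncomputable def H2 (μ : ℂ) (x : ℝ) (z : ℂ) : ℂ :=
  Complex.exp (x * z) * (x * (x * S (cf μ) (x * (1 - x) * z ^ 2)
    + 2 * (x * (1 - x)) * z * S (sh (cf μ)) (x * (1 - x) * z ^ 2))
    + (x * (2 * (x * (1 - x)) * z * S (sh (cf μ)) (x * (1 - x) * z ^ 2))
    + (2 * (x * (1 - x)) * S (sh (cf μ)) (x * (1 - x) * z ^ 2)
    + 2 * (x * (1 - x)) * z * (2 * (x * (1 - x)) * z * S (sh (sh (cf μ))) (x * (1 - x) * z ^ 2)))))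

noncomputable def Hx (μ : ℂ) (x : ℝ) (z : ℂ) : ℂ :=
  Complex.exp (x * z) * (z * S (cf μ) (x * (1 - x) * z ^ 2)
    + (1 - 2 * x) * z ^ 2 * S (sh (cf μ)) (x * (1 - x) * z ^ 2))

lemma S_cont {c : ℕ → ℂ} (h : Dom c) : Continuous (S c) :=
  continuous_iff_continuousAt.2 fun w => (h.hasDerivAt w).continuousAt

variable {μ : ℂ}

lemma H_cont (hμ : -1 / 2 < μ.re) : Continuous fun p : ℝ × ℂ => H μ p.1 p.2 := by
  have := S_cont (cf_dom hμ)
  unfold H; fun_prop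

lemma H1_cont (hμ : -1 / 2 < μ.re) : Continuous fun p : ℝ × ℂ => H1 μ p.1 p.2 := by
  have := S_cont (cf_dom hμ)
  have := S_cont (cf_dom hμ).sh
  unfold H1; fun_prop

lemma H2_cont (hμ : -1 / 2 < μ.re) : Continuous fun p : ℝ × ℂ => H2 μ p.1 p.2 := by
  have := S_cont (cf_dom hμ)
  have := S_cont (cf_dom hμ).sh
  have := S_cont (cf_dom hμ).sh.sh
  unfold H2; fun_prop

lemma inner_deriv (a : ℂ) (z : ℂ) : HasDerivAt (fun z : ℂ => a * z ^ 2) (2 * a * z) z := by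
  refine ((hasDerivAt_pow 2 z).const_mul a).congr_deriv ?_
  push_cast; ring

lemma exp_deriv (a : ℂ) (z : ℂ) :
    HasDerivAt (fun z : ℂ => Complex.exp (a * z)) (Complex.exp (a * z) * a) z := by
  simpa using ((hasDerivAt_id z).const_mul a).cexp

lemma H_deriv (hμ : -1 / 2 < μ.re) (x : ℝ) (z : ℂ) : HasDerivAt (H μ x) (H1 μ x z) z := by
  have h0 := ((cf_dom hμ).hasDerivAt (x * (1 - x) * z ^ 2)).comp z (inner_deriv _ z)
  refine ((exp_deriv x z).mul h0).congr_deriv ?_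
  simp only [H1, Function.comp]; ring

lemma H1_deriv (hμ : -1 / 2 < μ.re) (x : ℝ) (z : ℂ) : HasDerivAt (H1 μ x) (H2 μ x z) z := by
  have h0 := ((cf_dom hμ).hasDerivAt (x * (1 - x) * z ^ 2)).comp z (inner_deriv _ z)
  have h1 := ((cf_dom hμ).sh.hasDerivAt (x * (1 - x) * z ^ 2)).comp z (inner_deriv _ z)
  have h2 := (hasDerivAt_id z).const_mul (2 * ((x : ℂ) * (1 - x)))
  refine ((exp_deriv x z).mul ((h0.const_mul (x : ℂ)).add (h2.mul h1))).congr_deriv ?_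
  simp only [H2, Function.comp, id, Pi.add_apply, Pi.mul_apply]; ring

lemma Hx_deriv (hμ : -1 / 2 < μ.re) (x : ℝ) (z : ℂ) :
    HasDerivAt (fun x : ℝ => H μ x z) (Hx μ x z) x := by
  have i : HasDerivAt (fun x : ℂ => x * (1 - x) * z ^ 2) ((1 - 2 * x) * z ^ 2) (x : ℂ) := by
    refine (((hasDerivAt_id (x : ℂ)).mul ((hasDerivAt_id (x : ℂ)).const_sub 1)).mul_const
      (z ^ 2)).congr_deriv ?_
    simp only [id]; ring
  have h0 := ((cf_dom hμ).hasDerivAt (x * (1 - x) * z ^ 2)).comp (x : ℂ) i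
  have e : HasDerivAt (fun x : ℂ => Complex.exp (x * z)) (Complex.exp (x * z) * z) (x : ℂ) := by
    simpa using ((hasDerivAt_id (x : ℂ)).mul_const z).cexp
  refine ((e.mul h0).comp_ofReal).congr_deriv ?_
  simp only [Hx, Function.comp]; ring

lemma Hx_cont (hμ : -1 / 2 < μ.re) (z : ℂ) : Continuous fun x : ℝ => Hx μ x z := by
  have := S_cont (cf_dom hμ)
  have := S_cont (cf_dom hμ).sh
  unfold Hx; fun_prop

/-- The pointwise identity. -/
lemma H_pde (hμ : -1 / 2 < μ.re) (α : ℂ) (x : ℝ) (z : ℂ) :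
    z * H2 μ x z + (2 * (μ + 1 / 2) - z) * H1 μ x z - 2 * α * H μ x z
      = -2 * (x * (1 - x) * Hx μ x z + (α - (μ + 1 / 2) * x) * H μ x z) := by
  have := G_ode hμ (x * (1 - x) * z ^ 2)
  simp only [H, H1, H2, Hx]
  linear_combination (4 * Complex.exp (x * z) * z * (x * (1 - x))) * this

noncomputable def ph (α β : ℂ) (x : ℝ) : ℂ := (x : ℂ) ^ (α - 1) * (1 - (x : ℂ)) ^ (β - 1)

lemma ph_int {α β : ℂ} (hα : 0 < α.re) (hβ : 0 < β.re) :
    IntervalIntegrable (ph α β) volume 0 1 := Complex.betaIntegral_convergent hα hβ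

lemma byparts (hμ : -1 / 2 < μ.re) {α β : ℂ} (hα : 0 < α.re) (hβ : 0 < β.re) (z : ℂ)
    (hs : α + β = μ + 1 / 2) :
    ∫ x in (0:ℝ)..1, ph α β x * (x * (1 - x) * Hx μ x z + (α - (μ + 1 / 2) * x) * H μ x z) = 0 := by
  have hα0 : α ≠ 0 := by rintro rfl; simp at hα
  have hβ0 : β ≠ 0 := by rintro rfl; simp at hβ
  have hc := H_cont hμ
  have hc' : Continuous fun x : ℝ => H μ x z := hc.comp (by fun_prop : Continuous fun x : ℝ => (x, z))
  have hx := Hx_cont hμ z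
  have key := intervalIntegral.integral_eq_sub_of_hasDerivAt_of_le (a := 0) (b := 1)
    (f := fun x : ℝ => (x : ℂ) ^ α * (1 - (x : ℂ)) ^ β * H μ x z)
    (f' := fun x : ℝ => ph α β x * (x * (1 - x) * Hx μ x z + (α - (μ + 1 / 2) * x) * H μ x z))
    zero_le_one ?_ ?_ ?_
  · rw [key]; simp [hα0, hβ0]
  · have c1 : Continuous fun x : ℝ => (x : ℂ) ^ α :=
      Complex.continuous_ofReal_cpow_const hα
    have c2 : Continuous fun x : ℝ => (1 - (x : ℂ)) ^ β := by
      have := (Complex.continuous_ofReal_cpow_const hβ).comp (by fun_prop : Continuous fun x : ℝ => 1 - x)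
      simpa [Function.comp_def] using this
    exact ((c1.mul c2).mul hc').continuousOn
  · intro x hx
    have hx0 : (x : ℂ) ≠ 0 := by exact_mod_cast hx.1.ne'
    have hx1 : (1 - (x : ℂ)) ≠ 0 := by
      have : (1 - x) ≠ 0 := by linarith [hx.2] |> fun h : 0 < 1 - x => h.ne'
      exact_mod_cast this
    have s1 : (x : ℂ) ∈ Complex.slitPlane := Complex.ofReal_mem_slitPlane.2 hx.1
    have s2 : (1 - (x : ℂ)) ∈ Complex.slitPlane := by
      have := Complex.ofReal_mem_slitPlane.2 (sub_pos.2 hx.2)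
      simpa using this
    have d1 := ((hasDerivAt_id (x : ℂ)).cpow_const (c := α) s1).comp_ofReal
    have d2 := (((hasDerivAt_id (x : ℂ)).const_sub 1).cpow_const (c := β) s2).comp_ofReal
    refine ((d1.mul d2).mul (Hx_deriv hμ x z)).congr_deriv ?_
    have e1 : (x : ℂ) ^ α = x ^ (α - 1) * x := by
      rw [Complex.cpow_sub _ _ hx0, Complex.cpow_one]; field_simp
    have e2 : (1 - (x : ℂ)) ^ β = (1 - (x : ℂ)) ^ (β - 1) * (1 - x) := by
      rw [Complex.cpow_sub _ _ hx1, Complex.cpow_one]; field_simp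
    simp only [id, ph, e1, e2, Pi.mul_apply, ← hs]
    ring
  · exact (ph_int hα hβ).mul_continuousOn (by fun_prop)

noncomputable def F (μ α β : ℂ) (z : ℂ) : ℂ := ∫ x in (0:ℝ)..1, ph α β x * H μ x z
noncomputable def F1 (μ α β : ℂ) (z : ℂ) : ℂ := ∫ x in (0:ℝ)..1, ph α β x * H1 μ x z
noncomputable def F2 (μ α β : ℂ) (z : ℂ) : ℂ := ∫ x in (0:ℝ)..1, ph α β x * H2 μ x z

lemma kummer (hμ : -1 / 2 < μ.re) {α β : ℂ} (hα : 0 < α.re) (hβ : 0 < β.re) (z : ℂ)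
    (hs : α + β = μ + 1 / 2) :
    z * F2 μ α β z + (2 * (μ + 1 / 2) - z) * F1 μ α β z - 2 * α * F μ α β z = 0 := by
  have sec : Continuous fun x : ℝ => (x, z) := by fun_prop
  have i0 := (ph_int hα hβ).mul_continuousOn ((H_cont hμ).comp sec).continuousOn
  have i1 := (ph_int hα hβ).mul_continuousOn ((H1_cont hμ).comp sec).continuousOn
  have i2 := (ph_int hα hβ).mul_continuousOn ((H2_cont hμ).comp sec).continuousOn
  simp only [F, F1, F2]
  rw [← intervalIntegral.integral_const_mul, ← intervalIntegral.integral_const_mul,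
    ← intervalIntegral.integral_const_mul, ← intervalIntegral.integral_add, ← intervalIntegral.integral_sub]
  · have := byparts hμ hα hβ z hs
    rw [← mul_zero (-2 : ℂ), ← this, ← intervalIntegral.integral_const_mul]
    congr 1; ext x
    linear_combination (ph α β x) * H_pde hμ α x z
  · exact (i2.const_mul _).add (i1.const_mul _)
  · exact i0.const_mul _
  · exact i2.const_mul _
  · exact i1.const_mul _

lemma integrand_eq (κ : ℂ) {t x : ℝ} (ht : 0 < t) (hx0 : 0 < x) (hx1 : x < 1) :
    (x : ℂ) ^ ((-κ + 1 / 2) / 2 - 1) * ((1 : ℂ) - (x : ℂ)) ^ ((κ + 1 / 2) / 2 - 1) *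
      Complex.exp (((x : ℂ) - 1 / 2) * t) * besselJ μ ((Real.sqrt (x * (1 - x)) : ℂ) * t) =
    ((t : ℂ) ^ μ * (1 / 2 : ℂ) ^ μ * Complex.exp (-t / 2)) *
      (ph ((μ - κ + 1 / 2) / 2) ((μ + κ + 1 / 2) / 2) x * H μ x t) := by
  have h1 : 0 < 1 - x := by linarith
  have hx0' : (x : ℂ) ≠ 0 := by exact_mod_cast hx0.ne'
  have hx1' : (1 - (x : ℂ)) ≠ 0 := by exact_mod_cast h1.ne'
  have hp : 0 < √(x * (1 - x)) * t := by positivity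
  have := besselJ_eq μ hp
  rw [Complex.ofReal_mul] at this
  rw [this]
  have e1 : (((√(x * (1 - x)) : ℝ) : ℂ) * t) ^ 2 = x * (1 - x) * t ^ 2 := by
    rw [mul_pow, ← Complex.ofReal_pow, Real.sq_sqrt (by positivity)]; push_cast; ring
  have e2 : (((√(x * (1 - x)) : ℝ) : ℂ) * t / 2) ^ μ =
      (x : ℂ) ^ (μ / 2) * (1 - (x : ℂ)) ^ (μ / 2) * ((t : ℂ) ^ μ * (1 / 2 : ℂ) ^ μ) := by
    have : (((√(x * (1 - x)) : ℝ) : ℂ) * t / 2) =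
      ((√x : ℝ) : ℂ) * ((√(1 - x) * (t * (1 / 2)) : ℝ) : ℂ) := by
      rw [Real.sqrt_mul hx0.le]; push_cast; ring
    rw [this, Complex.mul_cpow_ofReal_nonneg (by positivity) (by positivity), Complex.ofReal_mul,
      Complex.mul_cpow_ofReal_nonneg (by positivity) (by positivity), Complex.ofReal_mul,
      Complex.mul_cpow_ofReal_nonneg (by positivity) (by positivity), sqrt_cpow μ hx0,
      sqrt_cpow μ h1]
    push_cast; ring
  have e3 : Complex.exp (((x : ℂ) - 1 / 2) * t) = Complex.exp (-t / 2) * Complex.exp (x * t) := by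
    rw [← Complex.exp_add]; congr 1; ring
  have e4 : (x : ℂ) ^ ((μ - κ + 1 / 2) / 2 - 1) =
      (x : ℂ) ^ ((-κ + 1 / 2) / 2 - 1) * (x : ℂ) ^ (μ / 2) := by
    rw [← Complex.cpow_add _ _ hx0']; congr 1; ring
  have e5 : (1 - (x : ℂ)) ^ ((μ + κ + 1 / 2) / 2 - 1) =
      (1 - (x : ℂ)) ^ ((κ + 1 / 2) / 2 - 1) * (1 - (x : ℂ)) ^ (μ / 2) := by
    rw [← Complex.cpow_add _ _ hx1']; congr 1; ring
  rw [e1, e2, e3, ph, H, e4, e5]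
  ring

lemma integral_eq (κ : ℂ) {t : ℝ} (ht : 0 < t) :
    (Real.sqrt t : ℂ) * ∫ ξ in (0:ℝ)..1,
            (ξ : ℂ) ^ ((-κ + 1 / 2) / 2 - 1) * ((1 : ℂ) - (ξ : ℂ)) ^ ((κ + 1 / 2) / 2 - 1) *
              Complex.exp (((ξ : ℂ) - 1 / 2) * t) *
              besselJ μ ((Real.sqrt (ξ * (1 - ξ)) : ℂ) * t) =
    (1 / 2 : ℂ) ^ μ * ((t : ℂ) ^ (μ + 1 / 2) * Complex.exp (-1 / 2 * t) *
      F μ ((μ - κ + 1 / 2) / 2) ((μ + κ + 1 / 2) / 2) t) := by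
  have ht0 : (t : ℂ) ≠ 0 := by exact_mod_cast ht.ne'
  have e : (√t : ℂ) = (t : ℂ) ^ (1 / 2 : ℂ) := by
    rw [← sqrt_cpow 1 ht, Complex.cpow_one]
  have : ∫ ξ in (0:ℝ)..1,
            (ξ : ℂ) ^ ((-κ + 1 / 2) / 2 - 1) * ((1 : ℂ) - (ξ : ℂ)) ^ ((κ + 1 / 2) / 2 - 1) *
              Complex.exp (((ξ : ℂ) - 1 / 2) * t) *
              besselJ μ ((Real.sqrt (ξ * (1 - ξ)) : ℂ) * t) =
      ((t : ℂ) ^ μ * (1 / 2 : ℂ) ^ μ * Complex.exp (-t / 2)) *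
        F μ ((μ - κ + 1 / 2) / 2) ((μ + κ + 1 / 2) / 2) t := by
    rw [F, ← intervalIntegral.integral_const_mul]
    refine intervalIntegral.integral_congr_ae ?_
    have h1 : ∀ᵐ x : ℝ, x ≠ 1 := by simp [ae_iff, measure_singleton]
    filter_upwards [h1] with x hx hx'
    rw [Set.uIoc_of_le zero_le_one] at hx'
    exact integrand_eq κ ht hx'.1 (lt_of_le_of_ne hx'.2 hx)
  rw [this, e, Complex.cpow_add _ _ ht0]
  have : Complex.exp (-t / 2) = Complex.exp (-1 / 2 * t) := by congr 1; ring
  rw [this]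
  ring

end WhitAux

open WhitAux in
/-- The function
`y(z) = √z · ∫₀¹ ξ^{(−κ+1/2)/2−1} (1−ξ)^{(κ+1/2)/2−1} e^{(ξ−1/2)z} J_μ(√(ξ(1−ξ)) z) dξ`
satisfies the Whittaker differential equation
`y'' + (−1/4 + κ/z + (1/4 − μ²)/z²) y = 0` for `z > 0`. -/
theorem whittaker_integral_satisfies_ODE (κ μ : ℂ)
    (h₁ : 0 < (μ + κ + 1 / 2).re) (h₂ : 0 < (μ - κ + 1 / 2).re) :
    ∀ z : ℝ, 0 < z →
      deriv (deriv (fun t : ℝ => (Real.sqrt t : ℂ) *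
          ∫ ξ in (0:ℝ)..1,
            (ξ : ℂ) ^ ((-κ + 1 / 2) / 2 - 1) * ((1 : ℂ) - (ξ : ℂ)) ^ ((κ + 1 / 2) / 2 - 1) *
              Complex.exp (((ξ : ℂ) - 1 / 2) * t) *
              besselJ μ ((Real.sqrt (ξ * (1 - ξ)) : ℂ) * t))) z +
        (-(1 / 4) + κ / (z : ℂ) + (1 / 4 - μ ^ 2) / (z : ℂ) ^ 2) *
          ((Real.sqrt z : ℂ) *
            ∫ ξ in (0:ℝ)..1,
              (ξ : ℂ) ^ ((-κ + 1 / 2) / 2 - 1) * ((1 : ℂ) - (ξ : ℂ)) ^ ((κ + 1 / 2) / 2 - 1) *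
                Complex.exp (((ξ : ℂ) - 1 / 2) * z) *
                besselJ μ ((Real.sqrt (ξ * (1 - ξ)) : ℂ) * z)) = 0 := by
  intro z hz
  have hμ : -1 / 2 < μ.re := by simp at h₁ h₂; linarith
  set α := (μ - κ + 1 / 2) / 2 with hα_def
  set β := (μ + κ + 1 / 2) / 2 with hβ_def
  have hα : 0 < α.re := by
    rw [hα_def, show (μ - κ + 1 / 2) / 2 = ((1 / 2 : ℝ) : ℂ) * (μ - κ + 1 / 2) by push_cast; ring,
      Complex.re_ofReal_mul]; positivity
  have hβ : 0 < β.re := by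
    rw [hβ_def, show (μ + κ + 1 / 2) / 2 = ((1 / 2 : ℝ) : ℂ) * (μ + κ + 1 / 2) by push_cast; ring,
      Complex.re_ofReal_mul]; positivity
  have hs : α + β = μ + 1 / 2 := by rw [hα_def, hβ_def]; ring
  have dF : ∀ w, HasDerivAt (F μ α β) (F1 μ α β w) w := fun w =>
    hasDerivAt_wint (ph_int hα hβ) (H_cont hμ) (H1_cont hμ) (H_deriv hμ) w
  have dF1 : ∀ w, HasDerivAt (F1 μ α β) (F2 μ α β w) w := fun w =>
    hasDerivAt_wint (ph_int hα hβ) (H1_cont hμ) (H2_cont hμ) (H1_deriv hμ) w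
  set E : ℂ → ℂ := fun w => w ^ (μ + 1 / 2) * Complex.exp (-1 / 2 * w) with hE
  have dE : ∀ t : ℝ, 0 < t → HasDerivAt E (E t * ((μ + 1 / 2) / t - 1 / 2)) (t : ℂ) := by
    intro t ht
    have ht0 : (t : ℂ) ≠ 0 := by exact_mod_cast ht.ne'
    refine (((hasDerivAt_id (t : ℂ)).cpow_const (c := μ + 1 / 2)
      (Complex.ofReal_mem_slitPlane.2 ht)).mul (exp_deriv (-1 / 2) (t : ℂ))).congr_deriv ?_
    simp only [hE, id, Complex.cpow_sub _ _ ht0, Complex.cpow_one]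
    ring
  set Y1 : ℂ → ℂ := fun w => (1 / 2 : ℂ) ^ μ *
    (E w * (((μ + 1 / 2) / w - 1 / 2) * F μ α β w + F1 μ α β w)) with hY1
  have D1 : ∀ t : ℝ, 0 < t → HasDerivAt (fun t : ℝ => (Real.sqrt t : ℂ) *
          ∫ ξ in (0:ℝ)..1,
            (ξ : ℂ) ^ ((-κ + 1 / 2) / 2 - 1) * ((1 : ℂ) - (ξ : ℂ)) ^ ((κ + 1 / 2) / 2 - 1) *
              Complex.exp (((ξ : ℂ) - 1 / 2) * t) *
              besselJ μ ((Real.sqrt (ξ * (1 - ξ)) : ℂ) * t)) (Y1 t) t := by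
    intro t ht
    have h := (((dE t ht).mul (dF t)).const_mul ((1 / 2 : ℂ) ^ μ)).comp_ofReal
    have h' : HasDerivAt (fun t : ℝ => (1 / 2 : ℂ) ^ μ * (E t * F μ α β t)) (Y1 t) t := by
      refine h.congr_deriv ?_
      simp only [hY1]; ring
    refine h'.congr_of_eventuallyEq ?_
    filter_upwards [eventually_gt_nhds ht] with s hs
    exact integral_eq κ hs
  have hz0 : (z : ℂ) ≠ 0 := by exact_mod_cast hz.ne'
  have D2 : HasDerivAt (fun t : ℝ => Y1 t) ((1 / 2 : ℂ) ^ μ *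
      (E z * ((μ + 1 / 2) / z - 1 / 2) * (((μ + 1 / 2) / z - 1 / 2) * F μ α β z + F1 μ α β z)
      + E z * (-(μ + 1 / 2) / z ^ 2 * F μ α β z + ((μ + 1 / 2) / z - 1 / 2) * F1 μ α β z
        + F2 μ α β z))) z := by
    have d : HasDerivAt (fun w : ℂ => (μ + 1 / 2) / w - 1 / 2) (-(μ + 1 / 2) / z ^ 2) (z : ℂ) := by
      refine (((hasDerivAt_inv hz0).const_mul (μ + 1 / 2)).sub_const (1 / 2)).congr_deriv ?_
      ring
    exact (((dE z hz).mul ((d.mul (dF z)).add (dF1 z))).const_mul _).comp_ofReal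
  have D3 := D2.congr_of_eventuallyEq
    (f₁ := deriv (fun t : ℝ => (Real.sqrt t : ℂ) *
          ∫ ξ in (0:ℝ)..1,
            (ξ : ℂ) ^ ((-κ + 1 / 2) / 2 - 1) * ((1 : ℂ) - (ξ : ℂ)) ^ ((κ + 1 / 2) / 2 - 1) *
              Complex.exp (((ξ : ℂ) - 1 / 2) * t) *
              besselJ μ ((Real.sqrt (ξ * (1 - ξ)) : ℂ) * t))) (by
      filter_upwards [eventually_gt_nhds hz] with s hs
      exact (D1 s hs).deriv)
  rw [D3.deriv, integral_eq κ hz]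
  have hk := kummer hμ hα hβ (z : ℂ) hs
  change _ + _ * ((1 / 2 : ℂ) ^ μ * (E z * F μ α β z)) = 0
  have h2α : 2 * α = μ - κ + 1 / 2 := by rw [hα_def]; ring
  rw [h2α] at hk
  have : F2 μ α β z = ((μ - κ + 1 / 2) * F μ α β z - (2 * (μ + 1 / 2) - z) * F1 μ α β z) / z := by
    rw [eq_div_iff hz0]
    linear_combination hk
  rw [this]
  field_simp
  ring
end

section
/- Let κ, μ be complex numbers with Re(μ + κ + 1/2) > 0, Re(μ − κ + 1/2) > 0, and Re(μ) > 0, and let z > 0. Then √z · ∫₀¹ ξ^{(−κ+1/2)/2 − 1} (1−ξ)^{(κ+1/2)/2 − 1} e^{(ξ−1/2)z} J_μ(√(ξ(1−ξ)) · z) dξ = (2^μ · Γ((μ−κ+1/2)/2) · Γ((μ+κ+1/2)/2) / (√π · Γ(2μ+1))) · z^{μ+1/2} · e^{−z/2} · Σ_{n=0}^∞ ((( (μ−κ+1/2)/2 )_n · ( (μ+κ+1/2)/2 )_n · (μ+1/2)_n) / ((μ+1/2)_{2n} · (2μ+1)_{2n} · n!)) · (−z²)^n · M((μ−κ+1/2)/2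 + n; μ + 1/2 + 2n; z). -/
open scoped Real

/-- Kummer's confluent hypergeometric function `M(a; b; z)`. -/
noncomputable def kummerM (a b z : ℂ) : ℂ :=
  ∑' n : ℕ, poch a n / (poch b n * n.factorial) * z ^ n

lemma poch_gamma (x : ℂ) (hx : 0 < x.re) (n : ℕ) :
    Complex.Gamma (x + n) = poch x n * Complex.Gamma x := by
  induction n with
  | zero => simp [poch]
  | succ n ih =>
    have hne : x + n ≠ 0 := by
      intro h
      have := congrArg Complex.re h
      simp at this
      have h2 : (0:ℝ) ≤ n := Nat.cast_nonneg n
      linarith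
    have e : x + ((n + 1 : ℕ) : ℂ) = x + n + 1 := by push_cast; ring
    rw [e, Complex.Gamma_add_one _ hne, ih]
    simp only [poch, Finset.prod_range_succ]
    ring

lemma gamma_ne (x : ℂ) (hx : 0 < x.re) : Complex.Gamma x ≠ 0 :=
  Complex.Gamma_ne_zero_of_re_pos hx

lemma one_le_norm_poch (x : ℂ) (hx : 1 ≤ x.re) (n : ℕ) : 1 ≤ ‖poch x n‖ := by
  unfold poch
  rw [norm_prod]
  induction n with
  | zero => simp
  | succ n ih =>
    rw [Finset.prod_range_succ]
    refine one_le_mul_of_one_le_of_one_le ih ?_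
    refine le_trans ?_ (Complex.re_le_norm _)
    simp
    have h2 : (0:ℝ) ≤ n := Nat.cast_nonneg n
    linarith

lemma hasSum_swap (w : ℝ → ℂ) (hw : IntervalIntegrable w MeasureTheory.volume 0 1)
    (c : ℕ → ℂ) (hc : Summable fun n => ‖c n‖) (g : ℕ → ℝ → ℂ) (hg : ∀ n, Continuous (g n))
    (hb : ∀ n, ∀ x ∈ Set.Ioc (0:ℝ) 1, ‖g n x‖ ≤ 1) :
    ∫ x in (0:ℝ)..1, w x * ∑' n, c n * g n x = ∑' n, c n * ∫ x in (0:ℝ)..1, w x * g n x := by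
  have hI : Set.uIoc (0:ℝ) 1 = Set.Ioc 0 1 := Set.uIoc_of_le zero_le_one
  have hs := intervalIntegral.hasSum_integral_of_dominated_convergence
    (μ := MeasureTheory.volume) (a := 0) (b := 1)
    (F := fun n x => w x * (c n * g n x)) (f := fun x => w x * ∑' n, c n * g n x)
    (fun n x => ‖w x‖ * ‖c n‖) ?_ ?_ ?_ ?_ ?_
  · rw [← hs.tsum_eq]
    congr 1; ext n
    rw [← intervalIntegral.integral_const_mul]
    congr 1; ext x; ring
  · intro n
    have := (intervalIntegrable_iff.1 hw).aestronglyMeasurable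
    exact this.mul ((hg n).aestronglyMeasurable.const_mul (c n))
  · intro n
    refine Filter.Eventually.of_forall fun x hx => ?_
    rw [hI] at hx
    rw [norm_mul, norm_mul]
    gcongr
    exact mul_le_of_le_one_right (norm_nonneg _) (hb n x hx)
  · exact Filter.Eventually.of_forall fun x hx => hc.mul_left _
  · simp_rw [tsum_mul_left]
    exact hw.norm.mul_const _
  · refine Filter.Eventually.of_forall fun x hx => ?_
    rw [hI] at hx
    refine HasSum.mul_left _ (Summable.hasSum ?_)
    refine Summable.of_norm_bounded hc fun n => ?_
    rw [norm_mul]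
    exact mul_le_of_le_one_right (norm_nonneg _) (hb n x hx)

lemma beta_gamma (u v : ℂ) (hu : 0 < u.re) (hv : 0 < v.re) :
    ∫ x in (0:ℝ)..1, (x : ℂ) ^ (u - 1) * (1 - (x : ℂ)) ^ (v - 1) =
      Complex.Gamma u * Complex.Gamma v / Complex.Gamma (u + v) := by
  have h := Complex.Gamma_mul_Gamma_eq_betaIntegral hu hv
  rw [eq_div_iff (gamma_ne _ (by simp; linarith)), h, Complex.betaIntegral]
  ring

lemma congr_Ioo (f g : ℝ → ℂ) (h : ∀ x ∈ Set.Ioo (0:ℝ) 1, f x = g x) :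
    ∫ x in (0:ℝ)..1, f x = ∫ x in (0:ℝ)..1, g x := by
  rw [intervalIntegral.integral_of_le zero_le_one, intervalIntegral.integral_of_le zero_le_one,
    MeasureTheory.integral_Ioc_eq_integral_Ioo, MeasureTheory.integral_Ioc_eq_integral_Ioo]
  exact MeasureTheory.setIntegral_congr_fun measurableSet_Ioo h

lemma kummer_int (u v : ℂ) (hu : 0 < u.re) (hv : 0 < v.re) (z : ℂ) :
    ∫ x in (0:ℝ)..1, (x : ℂ) ^ (u - 1) * (1 - (x : ℂ)) ^ (v - 1) * Complex.exp (x * z) =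
      Complex.Gamma u * Complex.Gamma v / Complex.Gamma (u + v) * kummerM u (u + v) z := by
  have huv : 0 < (u + v).re := by simp; linarith
  have hexp : ∀ x : ℝ, Complex.exp (x * z) = ∑' n : ℕ, (z ^ n / (n.factorial : ℂ)) * (x : ℂ) ^ n := by
    intro x
    rw [Complex.exp_eq_exp_ℂ, NormedSpace.exp_eq_tsum_div]
    refine tsum_congr fun n => ?_
    rw [mul_pow]; ring
  simp_rw [hexp]
  rw [hasSum_swap (fun x : ℝ => (x : ℂ) ^ (u - 1) * (1 - (x : ℂ)) ^ (v - 1))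
    (Complex.betaIntegral_convergent hu hv) (fun n => z ^ n / (n.factorial : ℂ)) ?_
    (fun n x => (x : ℂ) ^ n) (fun n => by fun_prop) ?_]
  · rw [kummerM, ← tsum_mul_left]
    congr 1; ext n
    have hun : 0 < (u + n).re := by simp; positivity
    have e : ∫ x in (0:ℝ)..1, (x : ℂ) ^ (u - 1) * (1 - (x : ℂ)) ^ (v - 1) * (x : ℂ) ^ n =
        ∫ x in (0:ℝ)..1, (x : ℂ) ^ (u + n - 1) * (1 - (x : ℂ)) ^ (v - 1) := by
      apply congr_Ioo
      intro x hx
      have hx0 : (x : ℂ) ≠ 0 := by exact_mod_cast hx.1.ne'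
      have : u + n - 1 = (u - 1) + n := by ring
      rw [this, Complex.cpow_add _ _ hx0, Complex.cpow_natCast]
      ring
    rw [e, beta_gamma _ _ hun hv, poch_gamma u hu]
    have e2 : u + n + v = u + v + n := by ring
    rw [e2, poch_gamma (u + v) huv]
    have := gamma_ne _ huv
    have := poch_ne _ huv n
    have : (n.factorial : ℂ) ≠ 0 := by exact_mod_cast n.factorial_ne_zero
    field_simp
  · have := Real.summable_pow_div_factorial ‖z‖
    simpa using this
  · intro n x hx
    rw [norm_pow, Complex.norm_real, Real.norm_of_nonneg hx.1.le]
    exact pow_le_one₀ hx.1.le hx.2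

lemma bessel_pt (μ : ℂ) (z : ℝ) (hz : 0 < z) (x : ℝ) (hx : x ∈ Set.Ioo (0:ℝ) 1) (n : ℕ) :
    ((Real.sqrt (x * (1 - x)) : ℂ) * z / 2) ^ (μ + 2 * n) =
      (x : ℂ) ^ (μ / 2) * (1 - (x : ℂ)) ^ (μ / 2) * ((z / 2 : ℂ) ^ (μ + 2 * n)) *
        ((x : ℂ) * (1 - x)) ^ n := by
  obtain ⟨h0, h1⟩ := hx
  have h1' : 0 < 1 - x := by linarith
  have hs : 0 < Real.sqrt (x * (1 - x)) := Real.sqrt_pos.2 (by positivity)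
  have e1 : (Real.sqrt (x * (1 - x)) : ℂ) * z / 2 =
      ((Real.sqrt (x * (1 - x)) : ℝ) : ℂ) * ((z / 2 : ℝ) : ℂ) := by push_cast; ring
  rw [e1, Complex.mul_cpow_ofReal_nonneg hs.le (by positivity)]
  have e2 : ((Real.sqrt (x * (1 - x)) : ℝ) : ℂ) ^ (μ + 2 * n) =
      (x : ℂ) ^ (μ / 2) * (1 - (x : ℂ)) ^ (μ / 2) * ((x : ℂ) * (1 - x)) ^ n := by
    have hsc : ((Real.sqrt (x * (1 - x)) : ℝ) : ℂ) ≠ 0 := by exact_mod_cast hs.ne'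
    have hxc : (x : ℂ) ≠ 0 := by exact_mod_cast h0.ne'
    have hyc : ((1 - x : ℝ) : ℂ) ≠ 0 := by exact_mod_cast h1'.ne'
    have e3 : (2 * n : ℂ) = ((2 * n : ℕ) : ℂ) := by push_cast; rfl
    rw [Complex.cpow_add _ _ hsc, e3, Complex.cpow_natCast, pow_mul, ← Complex.ofReal_pow,
      Real.sq_sqrt (by positivity)]
    have e4 : (1 - (x : ℂ)) = ((1 - x : ℝ) : ℂ) := by push_cast; rfl
    rw [e4, Complex.cpow_def_of_ne_zero hsc, Complex.cpow_def_of_ne_zero hxc,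
      Complex.cpow_def_of_ne_zero hyc, ← Complex.ofReal_log hs.le, ← Complex.ofReal_log h0.le,
      ← Complex.ofReal_log h1'.le, Real.log_sqrt (by positivity), Real.log_mul h0.ne' h1'.ne',
      ← Complex.exp_add]
    push_cast
    congr 2
    ring
  rw [e2]
  push_cast
  ring

lemma final_alg (sz s G3 F Z Y E pa Ga pb Gb p2 G1 K T sp G2 p1 q2 : ℂ) {f : ℂ}
    (n1 : G1 ≠ 0) (n2 : G2 ≠ 0) (n3 : G3 ≠ 0) (n4 : p2 ≠ 0) (n5 : q2 ≠ 0) (n6 : F ≠ 0)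
    (n7 : sp ≠ 0) (h : q2 * G2 * sp = p1 * G1 * G3 * (T * T * f)) :
    sz * (s / (G3 * F) * (Z * Y) * (E * (pa * Ga * (pb * Gb) / (p2 * G1) * K))) =
      T * Ga * Gb / (sp * G2) *
        (Z * T * sz * E * (pa * pb * p1 / (p2 * q2 * F) * (s * f * Y) * K)) := by
  have g : 1 / (G3 * G1) = T * T * f * p1 / (q2 * G2 * sp) := by
    rw [div_eq_div_iff (mul_ne_zero n3 n1) (mul_ne_zero (mul_ne_zero n5 n2) n7), h]
    ring
  calc _ = 1 / (G3 * G1) * (sz * s / F * Z * Y * E * (pa * Ga * pb * Gb / p2 * K)) := by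
        field_simp
    _ = _ := by
        rw [g]
        simp only [div_eq_mul_inv, mul_inv]
        ring

/-- The Whittaker-type integral expanded as a series of confluent hypergeometric
functions. -/
theorem whittaker_integral_eq_kummer_sum (κ μ : ℂ) (z : ℝ) (hz : 0 < z)
    (h₁ : 0 < (μ + κ + 1 / 2).re) (h₂ : 0 < (μ - κ + 1 / 2).re) (h₃ : 0 < μ.re) :
    (Real.sqrt z : ℂ) *
        ∫ ξ in (0:ℝ)..1,
          (ξ : ℂ) ^ ((-κ + 1 / 2) / 2 - 1) * ((1 : ℂ) - (ξ : ℂ)) ^ ((κ + 1 / 2) / 2 - 1) *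
            Complex.exp (((ξ : ℂ) - 1 / 2) * z) *
            besselJ μ ((Real.sqrt (ξ * (1 - ξ)) : ℂ) * z) =
      (2 : ℂ) ^ μ * Complex.Gamma ((μ - κ + 1 / 2) / 2) * Complex.Gamma ((μ + κ + 1 / 2) / 2) /
          (Real.sqrt π * Complex.Gamma (2 * μ + 1)) *
        ((z : ℂ) ^ (μ + 1 / 2) * Complex.exp (-(z : ℂ) / 2) *
          ∑' n : ℕ,
            poch ((μ - κ + 1 / 2) / 2) n * poch ((μ + κ + 1 / 2) / 2) n * poch (μ + 1 / 2) n /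
                (poch (μ + 1 / 2) (2 * n) * poch (2 * μ + 1) (2 * n) * n.factorial) *
              (-(z : ℂ) ^ 2) ^ n *
              kummerM ((μ - κ + 1 / 2) / 2 + n) (μ + 1 / 2 + 2 * n) z) := by
  set a := (μ - κ + 1 / 2) / 2 with ha
  set b := (μ + κ + 1 / 2) / 2 with hb
  have hab : a + b = μ + 1 / 2 := by rw [ha, hb]; ring
  have har : 0 < a.re := by
    have : a.re = (μ - κ + 1 / 2).re / 2 := by rw [ha]; simp
    rw [this]; linarith
  have hbr : 0 < b.re := by
    have : b.re = (μ + κ + 1 / 2).re / 2 := by rw [hb]; simp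
    rw [this]; linarith
  have hμ1 : 0 < (μ + 1).re := by simp; linarith
  have hμh : 0 < (μ + 1 / 2).re := by simp; linarith
  have hμ2 : 0 < (2 * μ + 1).re := by simp; linarith
  have hzc : (z : ℂ) ≠ 0 := by exact_mod_cast hz.ne'
  have hz2 : (z / 2 : ℂ) ≠ 0 := div_ne_zero hzc two_ne_zero
  let c : ℕ → ℂ := fun n => ((-1 : ℂ) ^ n / (Complex.Gamma (μ + n + 1) * n.factorial)) *
    (z / 2 : ℂ) ^ (μ + 2 * n)
  have hzpow : ∀ n : ℕ, (z / 2 : ℂ) ^ (μ + 2 * n) = (z / 2 : ℂ) ^ μ * ((z / 2 : ℂ) ^ 2) ^ n := by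
    intro n
    have e3 : (2 * n : ℂ) = ((2 * n : ℕ) : ℂ) := by push_cast; rfl
    rw [Complex.cpow_add _ _ hz2, e3, Complex.cpow_natCast, pow_mul]
  have hc : Summable fun n => ‖c n‖ := by
    have hs := (Real.summable_pow_div_factorial (‖(z / 2 : ℂ)‖ ^ 2)).mul_left
      (‖(z / 2 : ℂ) ^ μ‖ / ‖Complex.Gamma (μ + 1)‖)
    refine Summable.of_nonneg_of_le (fun _ => norm_nonneg _) (fun n => ?_) hs
    have e : μ + n + 1 = μ + 1 + n := by ring
    have hG : 0 < ‖Complex.Gamma (μ + 1)‖ := norm_pos_iff.2 (gamma_ne _ hμ1)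
    have hp := one_le_norm_poch (μ + 1) (by simp; linarith) n
    have hf : (0:ℝ) < n.factorial := by exact_mod_cast n.factorial_pos
    simp only [c]
    rw [e, poch_gamma _ hμ1, hzpow]
    simp only [norm_mul, norm_div, norm_pow, norm_neg, norm_one, one_pow, Complex.norm_natCast,
      Complex.norm_real]
    calc _ = ‖(z / 2 : ℂ) ^ μ‖ / ‖Complex.Gamma (μ + 1)‖ *
          ((‖(z / 2 : ℂ)‖ ^ 2) ^ n / n.factorial) * (1 / ‖poch (μ + 1) n‖) := by
            simp only [norm_div, Complex.norm_real]
            field_simp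
      _ ≤ ‖(z / 2 : ℂ) ^ μ‖ / ‖Complex.Gamma (μ + 1)‖ *
          ((‖(z / 2 : ℂ)‖ ^ 2) ^ n / n.factorial) * 1 := by
            gcongr
            rw [div_le_one (by linarith)]
            exact hp
      _ = _ := by
            simp only [norm_div, Complex.norm_real, mul_one]
  let w : ℝ → ℂ := fun x => (x : ℂ) ^ (a - 1) * (1 - (x : ℂ)) ^ (b - 1) *
    Complex.exp (((x : ℂ) - 1 / 2) * z)
  have hw : IntervalIntegrable w MeasureTheory.volume 0 1 :=
    (Complex.betaIntegral_convergent har hbr).mul_continuousOn (by fun_prop)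
  have hI : (∫ ξ in (0:ℝ)..1,
          (ξ : ℂ) ^ ((-κ + 1 / 2) / 2 - 1) * ((1 : ℂ) - (ξ : ℂ)) ^ ((κ + 1 / 2) / 2 - 1) *
            Complex.exp (((ξ : ℂ) - 1 / 2) * z) *
            besselJ μ ((Real.sqrt (ξ * (1 - ξ)) : ℂ) * z)) =
      ∫ x in (0:ℝ)..1, w x * ∑' n, c n * ((x : ℂ) * (1 - x)) ^ n := by
    apply congr_Ioo
    intro x hx
    have hxc : (x : ℂ) ≠ 0 := by exact_mod_cast hx.1.ne'
    have hyc : (1 - (x : ℂ)) ≠ 0 := by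
      have : 1 - x ≠ 0 := by linarith [hx.2]
      exact_mod_cast this
    have ea : a - 1 = ((-κ + 1 / 2) / 2 - 1) + μ / 2 := by rw [ha]; ring
    have eb : b - 1 = ((κ + 1 / 2) / 2 - 1) + μ / 2 := by rw [hb]; ring
    have eB : besselJ μ ((Real.sqrt (x * (1 - x)) : ℂ) * z) =
        (x : ℂ) ^ (μ / 2) * (1 - (x : ℂ)) ^ (μ / 2) * ∑' n, c n * ((x : ℂ) * (1 - x)) ^ n := by
      rw [besselJ, ← tsum_mul_left]
      congr 1; ext n
      rw [bessel_pt μ z hz x hx n]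
      simp only [c]
      ring
    simp only [w]
    rw [eB, ea, eb, Complex.cpow_add _ _ hxc, Complex.cpow_add _ _ hyc]
    ring
  rw [hI, hasSum_swap w hw c hc (fun n x => ((x : ℂ) * (1 - x)) ^ n) (fun n => by fun_prop) ?_]
  · rw [← tsum_mul_left, ← tsum_mul_left, ← tsum_mul_left]
    congr 1; ext n
    have han : 0 < (a + n).re := by simp; positivity
    have hbn : 0 < (b + n).re := by simp; positivity
    have e : ∫ x in (0:ℝ)..1, w x * ((x : ℂ) * (1 - x)) ^ n =
        Complex.exp (-(z : ℂ) / 2) * ∫ x in (0:ℝ)..1,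
          (x : ℂ) ^ (a + n - 1) * (1 - (x : ℂ)) ^ (b + n - 1) * Complex.exp (x * z) := by
      rw [← intervalIntegral.integral_const_mul]
      apply congr_Ioo
      intro x hx
      have hxc : (x : ℂ) ≠ 0 := by exact_mod_cast hx.1.ne'
      have hyc : (1 - (x : ℂ)) ≠ 0 := by
        have : 1 - x ≠ 0 := by linarith [hx.2]
        exact_mod_cast this
      have ea : a + n - 1 = (a - 1) + n := by ring
      have eb : b + n - 1 = (b - 1) + n := by ring
      have ee : ((x : ℂ) - 1 / 2) * z = -(z : ℂ) / 2 + x * z := by ring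
      simp only [w]
      rw [ea, eb, ee, Complex.cpow_add _ _ hxc, Complex.cpow_add _ _ hyc, Complex.exp_add,
        Complex.cpow_natCast, Complex.cpow_natCast, mul_pow]
      ring
    have eab : a + n + (b + n) = μ + 1 / 2 + 2 * n := by rw [← hab]; ring
    rw [e, kummer_int _ _ han hbn, eab, poch_gamma a har, poch_gamma b hbr]
    have e2n : (2 * n : ℂ) = ((2 * n : ℕ) : ℂ) := by push_cast; rfl
    have g1 : Complex.Gamma (μ + 1 / 2 + 2 * n) =
        poch (μ + 1 / 2) (2 * n) * Complex.Gamma (μ + 1 / 2) := by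
      rw [e2n, poch_gamma _ hμh]
    have g2 : poch (2 * μ + 1) (2 * n) * Complex.Gamma (2 * μ + 1) * (Real.sqrt π : ℂ) =
        poch (μ + 1 / 2) n * Complex.Gamma (μ + 1 / 2) * Complex.Gamma (μ + n + 1) *
          ((2 : ℂ) ^ μ * (2 : ℂ) ^ μ * 4 ^ n) := by
      have hd := Complex.Gamma_mul_Gamma_add_half (μ + 1 / 2 + n)
      have q1 : μ + 1 / 2 + n + 1 / 2 = μ + n + 1 := by ring
      have q2 : 2 * (μ + 1 / 2 + n) = 2 * μ + 1 + ((2 * n : ℕ) : ℂ) := by push_cast; ring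
      have q3 : 1 - (2 * μ + 1 + ((2 * n : ℕ) : ℂ)) = -(μ + μ + ((2 * n : ℕ) : ℂ)) := by ring
      rw [q1, q2, q3, poch_gamma _ hμ2, poch_gamma _ hμh, Complex.cpow_neg,
        Complex.cpow_add _ _ two_ne_zero, Complex.cpow_add _ _ two_ne_zero, Complex.cpow_natCast,
        pow_mul] at hd
      rw [hd]
      have : (2:ℂ) ^ μ ≠ 0 := by simp [Complex.cpow_eq_zero_iff]
      have h4 : ((2:ℂ) ^ 2) = 4 := by norm_num
      rw [h4]
      field_simp
    have g3 : (z / 2 : ℂ) ^ μ * (2 : ℂ) ^ μ = (z : ℂ) ^ μ := by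
      have := Complex.mul_cpow_ofReal_nonneg (a := z / 2) (b := 2) (by positivity) (by positivity) μ
      push_cast at this
      rw [← this]
      congr 1
      ring
    have g4 : (z : ℂ) ^ (μ + 1 / 2) = (z : ℂ) ^ μ * (Real.sqrt z : ℂ) := by
      rw [Complex.cpow_add _ _ hzc, Real.sqrt_eq_rpow, Complex.ofReal_cpow hz.le]
      push_cast
      rfl
    simp only [c]
    rw [g1, g4, ← g3, hzpow]
    have n1 := gamma_ne _ hμh
    have n2 := gamma_ne _ hμ2
    have n3 : Complex.Gamma (μ + n + 1) ≠ 0 := gamma_ne _ (by simp; positivity)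
    have n4 := poch_ne _ hμh (2 * n)
    have n5 := poch_ne _ hμ2 (2 * n)
    have n6 : (n.factorial : ℂ) ≠ 0 := by exact_mod_cast n.factorial_ne_zero
    have n7 : (Real.sqrt π : ℂ) ≠ 0 := by exact_mod_cast (Real.sqrt_pos.2 Real.pi_pos).ne'
    have n8 : (2:ℂ) ^ μ ≠ 0 := by simp [Complex.cpow_eq_zero_iff]
    have n9 := poch_ne _ hμh n
    have g5 : (-(z : ℂ) ^ 2) ^ n = (-1) ^ n * 4 ^ n * ((z / 2 : ℂ) ^ 2) ^ n := by
      rw [← mul_pow, ← mul_pow]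
      congr 1
      ring
    rw [g5]
    exact final_alg _ _ _ _ _ _ _ _ _ _ _ _ _ _ _ _ _ _ _ n1 n2 n3 n4 n5 n6 n7 g2
  · intro n x hx
    have e : ((x : ℂ) * (1 - x)) = ((x * (1 - x) : ℝ) : ℂ) := by push_cast; rfl
    have h0 : 0 ≤ x * (1 - x) := mul_nonneg hx.1.le (by linarith [hx.2])
    rw [e, norm_pow, Complex.norm_real, Real.norm_of_nonneg h0]
    exact pow_le_one₀ h0 (by nlinarith [hx.1, hx.2])
end
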